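/- arXiv:2103.08027 — 3 statements merged into one kernel-verified Lean document; each statement's English description precedes it below -/
import Mathlib

section
/- Other generalized Faulhaber formula version: Let m ∈ ℂ with m ≠ −1, let x ∈ ℝ with x > 0, and let a ∈ ℕ₀. Then the series ∑_{k=1}^{∞} (−1)^k (∑_{l=1}^{k} C(m+1, l+a) S_k^{(1)}(l+a) B_{l+a}({x})) / ((x+1)(x+2)⋯(x+k)) converges absolutely, and ∑_{k=1}^{⌊x⌋} k^m = x^{m+1}/(m+1) + ζ(−m) + (1/(m+1)) ∑_{k=1}^{a} (−1)^k C(m+1, k) B_k({x}) x^{m−k+1} + (x^{m+1}/(m+1)) ∑_{k=1}^{∞} (−1)^k (∑_{l=1}^{k} C(m+1, l+a) S_k^{(1)}(l+a) B_{l+a}({x})) / ((x+1)(x+2)⋯(x+k)). -/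
open Finset in
/-- Unsigned Stirling numbers of the first kind, via the rising-factorial recurrence:
`z(z+1)⋯(z+k−1) = ∑ l, stirling1Unsigned k l * z^l`. -/
def stirling1Unsigned : ℕ → ℕ → ℕ
  | 0, 0 => 1
  | 0, _ + 1 => 0
  | k + 1, 0 => k * stirling1Unsigned k 0
  | k + 1, l + 1 => stirling1Unsigned k l + k * stirling1Unsigned k (l + 1)

/-- The Stirling numbers of the first kind `S_k^{(1)}(l)` of the paper, defined by
`z(z+1)⋯(z+k−1) = (−1)^k ∑_{l=0}^k (−1)^l S_k^{(1)}(l) z^l`, i.e.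
`S_k^{(1)}(l) = (−1)^{k−l}` times the coefficient of `z^l` in the rising factorial. -/
def S1 (k l : ℕ) : ℤ := (-1) ^ (k + l) * stirling1Unsigned k l

/-- The `n`-th Bernoulli polynomial `B_n(x) = ∑_{k=0}^n C(n,k) B_k x^{n−k}`,
with `B_1 = −1/2`. -/
noncomputable def bernPoly (n : ℕ) (x : ℝ) : ℝ :=
  ∑ k ∈ Finset.range (n + 1), (n.choose k : ℝ) * (bernoulli k : ℝ) * x ^ (n - k)

/-- The generalized binomial coefficient `C(w,k) = w(w−1)⋯(w−k+1)/k!`. -/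
noncomputable def cchoose (w : ℂ) (k : ℕ) : ℂ :=
  (∏ i ∈ Finset.range k, (w - i)) / (k.factorial : ℂ)

/-- The rising product `(z+1)(z+2)⋯(z+k)`. -/
noncomputable def risingProd (z : ℂ) (k : ℕ) : ℂ :=
  ∏ i ∈ Finset.range k, (z + i + 1)

/-- The rising product `(x+1)(x+2)⋯(x+k)` over the reals. -/
noncomputable def risingProdR (x : ℝ) (k : ℕ) : ℝ :=
  ∏ i ∈ Finset.range k, (x + i + 1)

/-- The digamma function `ψ(z) = Γ′(z)/Γ(z)`. -/
noncomputable def digamma (z : ℂ) : ℂ := deriv Complex.Gamma z / Complex.Gamma z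

/-!
Let `θ = Int.fract x` and `z = -(m + 1)`. For `0 < z.re`, Euler's integral for the Gamma function
turns `z * x ^ z * ∑ i ≥ 1, (x - θ + i) ^ (-z - 1)`, a tail of the series of `ζ (z + 1)`, into
`Γ(z)⁻¹ ∫ exp (-s) * s ^ (z - 1) * g (s / x)`, where `g l = l * exp (l * θ) / (exp l - 1)` is the
generating function of the Bernoulli polynomials at `θ`. Integrating `g` term by term only gives a
divergent series in `1 / x`; substituting `x ^ (-j) = ∑ k, [k, j] / ((x + 1) ⋯ (x + k))`, with
`[k, j]` the unsigned Stirling numbers of the first kind, makes it converge. To see this, expand `g`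
in a Fourier series in `θ`: for a single mode the Stirling transform is a rising factorial at a
purely imaginary point `β * I`, which Euler's product for `sinh` bounds by
`|β| * (k - 1)! * exp (π * |β| / 2)`. As `|β| ≤ s / (2 * π)`, this costs a factor `exp (s / 4)`,
which `exp (-s)` absorbs. The bounds are locally uniform in `z`, so the identity continues
analytically to all `z ≠ 0`.
-/

namespace Faulhaber

open Finset Filter Topology MeasureTheory

/-! ### Inverse factorial series -/

theorem stirling1Unsigned_eq_stirlingFirst :
    ∀ k l : ℕ, stirling1Unsigned k l = Nat.stirlingFirst k l
  | 0, 0 => rfl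
  | 0, _ + 1 => rfl
  | 0 + 1, 0 => rfl
  | k + 1 + 1, 0 => by
    rw [stirling1Unsigned, stirling1Unsigned_eq_stirlingFirst, Nat.stirlingFirst_succ_zero,
      mul_zero, Nat.stirlingFirst_succ_zero]
  | k + 1, l + 1 => by
    rw [stirling1Unsigned, stirling1Unsigned_eq_stirlingFirst k l,
      stirling1Unsigned_eq_stirlingFirst k (l + 1), Nat.stirlingFirst_succ_succ, add_comm]

theorem bernPoly_eq_bernoulliFun (n : ℕ) (x : ℝ) : bernPoly n x = bernoulliFun n x := by
  rw [bernPoly, bernoulliFun, Polynomial.bernoulli, Polynomial.map_sum, Polynomial.eval_finsetSum]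
  refine sum_congr rfl fun k _ ↦ ?_
  simp only [Polynomial.map_monomial, Polynomial.eval_monomial, map_mul, eq_ratCast, map_natCast]
  ring

theorem neg_one_pow_mul_cchoose (w : ℂ) (j : ℕ) :
    (-1) ^ j * cchoose w j = (ascPochhammer ℂ j).eval (-w) / j.factorial := by
  rw [ascPochhammer_eval_neg_eq_descPochhammer, descPochhammer_eval_eq_prod_range, cchoose,
    mul_div_assoc]

theorem risingProd_succ (z : ℂ) (k : ℕ) :
    risingProd z (k + 1) = (z + k + 1) * risingProd z k := by
  rw [risingProd, prod_range_succ, mul_comm, risingProd]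

theorem risingProdR_succ (x : ℝ) (k : ℕ) :
    risingProdR x (k + 1) = (x + k + 1) * risingProdR x k := by
  rw [risingProdR, prod_range_succ, mul_comm, risingProdR]

theorem risingProd_ofReal (x : ℝ) (k : ℕ) : risingProd x k = risingProdR x k := by
  simp [risingProd, risingProdR]

theorem risingProdR_pos {x : ℝ} (hx : 0 < x) (k : ℕ) : 0 < risingProdR x k :=
  prod_pos fun i _ ↦ by positivity

theorem norm_risingProd_ofReal {x : ℝ} (hx : 0 < x) (k : ℕ) :
    ‖risingProd x k‖ = risingProdR x k := by
  rw [risingProd_ofReal, Complex.norm_of_nonneg (risingProdR_pos hx k).le]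

theorem risingProd_ofReal_ne_zero {x : ℝ} (hx : 0 < x) (k : ℕ) : risingProd x k ≠ 0 := by
  rw [← norm_pos_iff, norm_risingProd_ofReal hx]
  exact risingProdR_pos hx k

theorem natCast_mul_eq_sum_sub_of_recurrence {R : Type*} [CommRing R] {x : R} {A B : ℕ → R}
    (hAB : ∀ k : ℕ, (x + k + 1) * A (k + 1) = B k + k * A k) (n : ℕ) :
    n * A n = ∑ k ∈ range n, B k - x * ∑ k ∈ range n, A (k + 1) := by
  induction n with
  | zero => simp
  | succ n ih =>
    rw [sum_range_succ, sum_range_succ]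
    push_cast
    linear_combination ih + hAB n

theorem eq_zero_of_tendsto_natCast_mul_of_summable {A : ℕ → ℂ} {L : ℂ} (hA : Summable A)
    (hL : Tendsto (fun n : ℕ ↦ n * A n) atTop (𝓝 L)) : L = 0 := by
  by_contra hne
  have hpos : 0 < ‖L‖ := norm_pos_iff.mpr hne
  refine Real.not_summable_one_div_natCast <|
    (hA.norm.mul_left (2 / ‖L‖)).of_norm_bounded_eventually_nat ?_
  filter_upwards [hL.norm.eventually_const_lt (half_lt_self hpos), eventually_gt_atTop 0]
    with n hn hn0
  have hn0' : (0 : ℝ) < n := Nat.cast_pos.mpr hn0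
  rw [norm_mul, Complex.norm_natCast] at hn
  rw [Real.norm_of_nonneg (by positivity), div_mul_eq_mul_div, div_le_div_iff₀ hn0' hpos]
  linarith

theorem hasSum_succ_of_recurrence {x b : ℂ} (hx : x ≠ 0) {A B : ℕ → ℂ} (hA : Summable A)
    (hB : HasSum B b) (hAB : ∀ k : ℕ, (x + k + 1) * A (k + 1) = B k + k * A k) :
    HasSum (fun k ↦ A (k + 1)) (b / x) := by
  obtain ⟨s, hs⟩ : Summable fun k ↦ A (k + 1) := (summable_nat_add_iff 1).mpr hA
  have hlim : Tendsto (fun n : ℕ ↦ n * A n) atTop (𝓝 (b - x * s)) := by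
    simp_rw [natCast_mul_eq_sum_sub_of_recurrence hAB]
    exact hB.tendsto_sum_nat.sub (hs.tendsto_sum_nat.const_mul _)
  have hbs : b - x * s = 0 := eq_zero_of_tendsto_natCast_mul_of_summable hA hlim
  rwa [← (eq_div_iff hx).mpr (by linear_combination -hbs : s * x = b)]

theorem stirlingFirst_div_risingProdR_recurrence {x : ℝ} (hx : 0 < x) (j k : ℕ) :
    (x + k + 1) * ((k + 1).stirlingFirst (j + 1) / risingProdR x (k + 1)) =
      k.stirlingFirst j / risingProdR x k +
        k * (k.stirlingFirst (j + 1) / risingProdR x k) := by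
  have hk : x + k + 1 ≠ 0 := by positivity
  have := risingProdR_pos hx k
  rw [risingProdR_succ, Nat.stirlingFirst_succ_succ]
  push_cast
  field_simp
  ring

theorem summable_stirlingFirst_div_risingProdR {x : ℝ} (hx : 0 < x) (j : ℕ) :
    Summable fun k ↦ (k.stirlingFirst j : ℝ) / risingProdR x k := by
  have hpos := risingProdR_pos hx
  have hnonneg (i k : ℕ) : 0 ≤ (k.stirlingFirst i : ℝ) / risingProdR x k :=
    div_nonneg (Nat.cast_nonneg _) (hpos k).le
  induction j with
  | zero =>
    refine summable_of_ne_finset_zero (s := {0}) fun k hk ↦ ?_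
    obtain ⟨n, rfl⟩ := Nat.exists_eq_succ_of_ne_zero (notMem_singleton.mp hk)
    simp
  | succ j ih =>
    rw [← summable_nat_add_iff 1]
    refine summable_of_sum_range_le
      (c := (∑' k, (k.stirlingFirst j : ℝ) / risingProdR x k) / x)
      (fun k ↦ hnonneg (j + 1) (k + 1)) fun n ↦ ?_
    have htel := natCast_mul_eq_sum_sub_of_recurrence
      (A := fun k ↦ (k.stirlingFirst (j + 1) : ℝ) / risingProdR x k)
      (stirlingFirst_div_risingProdR_recurrence hx j) n
    have hpartial := ih.sum_le_tsum (range n) fun k _ ↦ hnonneg j k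
    have hlast := mul_nonneg n.cast_nonneg (hnonneg (j + 1) n)
    rw [le_div_iff₀ hx]
    linarith

theorem hasSum_stirlingFirst_div_risingProd {x : ℝ} (hx : 0 < x) (j : ℕ) :
    HasSum (fun k ↦ (k.stirlingFirst j : ℂ) / risingProd x k) (1 / (x : ℂ) ^ j) := by
  have hx0 : (x : ℂ) ≠ 0 := Complex.ofReal_ne_zero.mpr hx.ne'
  induction j with
  | zero =>
    convert hasSum_ite_eq (0 : ℕ) (1 : ℂ) using 1
    · ext (_ | k) <;> simp [risingProd]
    · simp
  | succ j ih =>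
    have hsum : Summable fun k ↦ (k.stirlingFirst (j + 1) : ℂ) / risingProd x k := by
      simpa [risingProd_ofReal] using!
        Complex.ofRealCLM.summable (summable_stirlingFirst_div_risingProdR hx (j + 1))
    have hrec (k : ℕ) : ((x : ℂ) + k + 1) *
        ((k + 1).stirlingFirst (j + 1) / risingProd x (k + 1)) =
          k.stirlingFirst j / risingProd x k + k * (k.stirlingFirst (j + 1) / risingProd x k) := by
      rw [risingProd_ofReal, risingProd_ofReal]
      exact_mod_cast congrArg ((↑) : ℝ → ℂ) (stirlingFirst_div_risingProdR_recurrence hx j k)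
    rw [← hasSum_nat_add_iff' 1]
    convert! hasSum_succ_of_recurrence hx0 hsum ih hrec using 1
    simp [pow_succ, div_eq_mul_inv, mul_comm]

/-- The part of degree at least `J` of the Stirling transform
`∑ j, [k, j] * a j` of a sequence, where `[k, j]` are the unsigned Stirling numbers of the first
kind. Dividing by `(x + 1) ⋯ (x + k)` and summing over `k` turns the formal series
`∑ j ≥ J, a j * x ^ (-j)` into an inverse factorial series. -/
noncomputable def stirlingTail (a : ℕ → ℂ) (J k : ℕ) : ℂ :=
  ∑ j ∈ Ico J (k + 1), (k.stirlingFirst j : ℂ) * a j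

/-- The inverse factorial series attached to the formal power series `∑ j ≥ J, a j * x ^ (-j)`. -/
noncomputable def factorialSeries (a : ℕ → ℂ) (J : ℕ) (x : ℝ) : ℂ :=
  ∑' k, stirlingTail a J k / risingProd x k

section StirlingTail

variable {a : ℕ → ℂ} {J J' : ℕ}

theorem stirlingTail_of_lt {k : ℕ} (h : k < J) : stirlingTail a J k = 0 := by
  rw [stirlingTail, Ico_eq_empty (by lia), sum_empty]

theorem stirlingTail_eq_sum_Ico {k M : ℕ} (hM : k < M) :
    stirlingTail a J k = ∑ j ∈ Ico J M, (k.stirlingFirst j : ℂ) * a j := by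
  refine sum_subset (Ico_subset_Ico_right hM) fun j hj hj' ↦ ?_
  rw [Nat.stirlingFirst_eq_zero_of_lt (by simp only [mem_Ico] at hj hj'; lia)]
  simp

theorem stirlingTail_eq_sum_add (h : J ≤ J') (k : ℕ) :
    stirlingTail a J k =
      ∑ j ∈ Ico J J', (k.stirlingFirst j : ℂ) * a j + stirlingTail a J' k := by
  have hM : k < max J' (k + 1) := Nat.lt_of_succ_le (le_max_right _ _)
  rw [stirlingTail_eq_sum_Ico hM, stirlingTail_eq_sum_Ico hM,
    sum_Ico_consecutive _ h (le_max_left _ _)]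

theorem hasSum_stirlingTail_div_iff {x : ℝ} (hx : 0 < x) (h : J ≤ J') {s : ℂ} :
    HasSum (fun k ↦ stirlingTail a J k / risingProd x k)
        (∑ j ∈ Ico J J', a j / (x : ℂ) ^ j + s) ↔
      HasSum (fun k ↦ stirlingTail a J' k / risingProd x k) s := by
  have hhead : HasSum (fun k ↦ ∑ j ∈ Ico J J', (k.stirlingFirst j : ℂ) * a j / risingProd x k)
      (∑ j ∈ Ico J J', a j / (x : ℂ) ^ j) := by
    refine hasSum_sum fun j _ ↦ ?_
    convert! (hasSum_stirlingFirst_div_risingProd hx j).mul_left (a j) using 1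
    · ext k; ring
    · ring
  have hsplit (k : ℕ) : stirlingTail a J k / risingProd x k =
      ∑ j ∈ Ico J J', (k.stirlingFirst j : ℂ) * a j / risingProd x k +
        stirlingTail a J' k / risingProd x k := by
    rw [stirlingTail_eq_sum_add h, add_div, sum_div]
  simp_rw [hsplit]
  refine ⟨fun hsum ↦ ?_, hhead.add⟩
  simpa using hsum.sub hhead

theorem summable_stirlingTail_div_of_le {x : ℝ} (hx : 0 < x) (h : J ≤ J')
    (hs : Summable fun k ↦ stirlingTail a J' k / risingProd x k) :
    Summable fun k ↦ stirlingTail a J k / risingProd x k :=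
  ((hasSum_stirlingTail_div_iff hx h).mpr hs.hasSum).summable

theorem factorialSeries_eq_sum_add {x : ℝ} (hx : 0 < x) (h : J ≤ J')
    (hs : Summable fun k ↦ stirlingTail a J' k / risingProd x k) :
    factorialSeries a J x = ∑ j ∈ Ico J J', a j / (x : ℂ) ^ j + factorialSeries a J' x :=
  ((hasSum_stirlingTail_div_iff hx h).mpr hs.hasSum).tsum_eq

theorem norm_stirlingTail_div_le {x : ℝ} (hx : 0 < x) {C : ℝ} {k : ℕ}
    (h : ‖stirlingTail a J k‖ ≤ C * k.stirlingFirst J) :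
    ‖stirlingTail a J k / risingProd x k‖ ≤ C * (k.stirlingFirst J / risingProdR x k) := by
  have := risingProdR_pos hx k
  rw [norm_div, norm_risingProd_ofReal hx, ← mul_div_assoc]
  gcongr

theorem summable_stirlingTail_div_of_norm_le {x : ℝ} (hx : 0 < x) {C : ℝ}
    (h : ∀ k, ‖stirlingTail a J k‖ ≤ C * k.stirlingFirst J) :
    Summable fun k ↦ stirlingTail a J k / risingProd x k :=
  ((summable_stirlingFirst_div_risingProdR hx J).mul_left C).of_norm_bounded
    fun k ↦ norm_stirlingTail_div_le hx (h k)

theorem stirlingTail_zero_succ (k : ℕ) : stirlingTail a 0 (k + 1) = stirlingTail a 1 (k + 1) := by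
  simp [stirlingTail_eq_sum_add zero_le_one]

end StirlingTail

/-! ### Rising factorials on the imaginary axis -/

theorem stirlingTail_pow_succ_succ (y : ℂ) (J k : ℕ) :
    stirlingTail (y ^ ·) (J + 1) (k + 1) =
      y * stirlingTail (y ^ ·) J k + k * stirlingTail (y ^ ·) (J + 1) k := by
  rw [stirlingTail, stirlingTail, stirlingTail_eq_sum_Ico (show k < k + 1 + 1 by lia),
    ← sum_Ico_add' _ J (k + 1) 1, ← sum_Ico_add' _ J (k + 1) 1, mul_sum, mul_sum,
    ← sum_add_distrib]
  refine sum_congr rfl fun j _ ↦ ?_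
  rw [Nat.stirlingFirst_succ_succ]
  push_cast
  ring

theorem stirlingTail_pow_zero (y : ℂ) (k : ℕ) :
    stirlingTail (y ^ ·) 0 k = (ascPochhammer ℂ k).eval y := by
  induction k with
  | zero => simp [stirlingTail]
  | succ k ih =>
    have htail : k * stirlingTail (y ^ ·) 1 k = k * stirlingTail (y ^ ·) 0 k := by
      rcases k with _ | k
      · simp
      · rw [stirlingTail_zero_succ]
    rw [stirlingTail_zero_succ, stirlingTail_pow_succ_succ, htail, ih, ascPochhammer_succ_eval]
    ring

theorem sinh_le_mul_exp (u : ℝ) : Real.sinh u ≤ u * Real.exp u := by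
  have hexp_neg : Real.exp u * (1 - 2 * u) ≤ Real.exp (-u) := by
    calc Real.exp u * (1 - 2 * u) ≤ Real.exp u * Real.exp (-(2 * u)) := by
          gcongr
          linarith [Real.add_one_le_exp (-(2 * u))]
      _ = Real.exp (-u) := by rw [← Real.exp_add]; ring_nf
  rw [Real.sinh_eq]
  linarith

theorem tendsto_euler_sinh_prod (β : ℝ) :
    Tendsto (fun n : ℕ ↦ Real.pi * β * ∏ i ∈ range n, (1 + β ^ 2 / ((i : ℝ) + 1) ^ 2)) atTop
      (𝓝 (Real.sinh (Real.pi * β))) := by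
  rw [← tendsto_ofReal_iff]
  convert (Complex.tendsto_euler_sin_prod (β * Complex.I)).mul_const (-Complex.I) using 1
  · ext n
    simp only [mul_pow, Complex.I_sq]
    push_cast
    have hprod : ∏ i ∈ range n, (1 + (β : ℂ) ^ 2 / ((i : ℂ) + 1) ^ 2) =
        ∏ i ∈ range n, (1 - (β : ℂ) ^ 2 * -1 / ((i : ℂ) + 1) ^ 2) :=
      prod_congr rfl fun i _ ↦ by ring
    rw [hprod]
    linear_combination (Real.pi * β *
      ∏ i ∈ range n, (1 - (β : ℂ) ^ 2 * -1 / ((i : ℂ) + 1) ^ 2)) * Complex.I_sq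
  · congr 1
    rw [← mul_assoc, Complex.sin_mul_I]
    push_cast
    linear_combination (Complex.sinh (Real.pi * β)) * Complex.I_sq

theorem prod_one_add_sq_div_sq_le_exp (β : ℝ) (k : ℕ) :
    ∏ i ∈ range k, (1 + β ^ 2 / ((i : ℝ) + 1) ^ 2) ≤ Real.exp (Real.pi * |β|) := by
  rcases eq_or_ne β 0 with rfl | hβ
  · simp
  have hpos : 0 < Real.pi * |β| := by positivity
  have hmono : Monotone fun n : ℕ ↦
      Real.pi * |β| * ∏ i ∈ range n, (1 + |β| ^ 2 / ((i : ℝ) + 1) ^ 2) := by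
    refine monotone_nat_of_le_succ fun n ↦ ?_
    rw [prod_range_succ]
    gcongr
    exact le_mul_of_one_le_right (by positivity) (le_add_of_nonneg_right (by positivity))
  have hsinh := hmono.ge_of_tendsto (tendsto_euler_sinh_prod |β|) k
  simp only [sq_abs] at hsinh
  exact le_of_mul_le_mul_left (hsinh.trans (sinh_le_mul_exp _)) hpos

theorem norm_ascPochhammer_eval_mul_I_sq (β : ℝ) (k : ℕ) :
    ‖(ascPochhammer ℂ (k + 1)).eval (β * Complex.I)‖ ^ 2 =
      (|β| * k.factorial) ^ 2 * ∏ i ∈ range k, (1 + β ^ 2 / ((i : ℝ) + 1) ^ 2) := by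
  induction k with
  | zero => simp
  | succ k ih =>
    have hfactor : ‖(β * Complex.I + ((k + 1 : ℕ) : ℂ))‖ ^ 2 =
        ((k : ℝ) + 1) ^ 2 * (1 + β ^ 2 / ((k : ℝ) + 1) ^ 2) := by
      rw [add_comm, ← Complex.ofReal_natCast, ← Complex.normSq_eq_norm_sq,
        Complex.normSq_add_mul_I]
      push_cast
      field_simp
    rw [ascPochhammer_succ_eval, norm_mul, mul_pow, ih, hfactor, prod_range_succ,
      Nat.factorial_succ]
    push_cast
    ring

theorem norm_ascPochhammer_eval_mul_I_le (β : ℝ) (k : ℕ) :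
    ‖(ascPochhammer ℂ (k + 1)).eval (β * Complex.I)‖ ≤
      |β| * k.factorial * Real.exp (Real.pi * |β| / 2) := by
  refine le_of_sq_le_sq ?_ (by positivity)
  rw [norm_ascPochhammer_eval_mul_I_sq, mul_pow _ (Real.exp _), ← Real.exp_nat_mul,
    Nat.cast_ofNat, mul_div_cancel₀ _ two_ne_zero]
  gcongr
  exact prod_one_add_sq_div_sq_le_exp β k

theorem norm_stirlingTail_pow_mul_I_le (β : ℝ) {J : ℕ} (hJ : 1 ≤ J) (k : ℕ) :
    ‖stirlingTail ((β * Complex.I) ^ ·) J k‖ ≤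
      |β| ^ J * Real.exp (Real.pi * |β| / 2) * k.stirlingFirst J := by
  induction k generalizing J with
  | zero =>
    rw [stirlingTail_of_lt hJ, norm_zero]
    positivity
  | succ k ih =>
    obtain ⟨J, rfl⟩ := Nat.exists_eq_add_of_le' hJ
    rcases Nat.eq_zero_or_pos J with rfl | hJ'
    · have hasc : stirlingTail ((β * Complex.I) ^ ·) 1 (k + 1) =
          (ascPochhammer ℂ (k + 1)).eval (β * Complex.I) := by
        rw [← stirlingTail_pow_zero, stirlingTail_zero_succ]
      simp only [zero_add, hasc, pow_one, Nat.stirlingFirst_one_right]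
      exact (norm_ascPochhammer_eval_mul_I_le β k).trans_eq (by ring)
    · rw [stirlingTail_pow_succ_succ, Nat.stirlingFirst_succ_succ]
      calc _ ≤ |β| * ‖stirlingTail ((β * Complex.I) ^ ·) J k‖ +
            k * ‖stirlingTail ((β * Complex.I) ^ ·) (J + 1) k‖ := by
            refine (norm_add_le _ _).trans_eq ?_
            simp
        _ ≤ |β| * (|β| ^ J * Real.exp (Real.pi * |β| / 2) * k.stirlingFirst J) +
            k * (|β| ^ (J + 1) * Real.exp (Real.pi * |β| / 2) * k.stirlingFirst (J + 1)) := by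
            gcongr
            exacts [ih hJ', ih hJ]
        _ = _ := by push_cast; ring

theorem hasSum_ascPochhammer_eval_div {x : ℝ} (hx : 0 < x) {y : ℂ} (hxy : (x : ℂ) - y ≠ 0)
    (hsum : Summable fun k ↦ (ascPochhammer ℂ k).eval y / risingProd x k) :
    HasSum (fun k ↦ (ascPochhammer ℂ k).eval y / risingProd x k) (x / (x - y)) := by
  have hx0 : (x : ℂ) ≠ 0 := Complex.ofReal_ne_zero.mpr hx.ne'
  set A : ℕ → ℂ := fun k ↦ (ascPochhammer ℂ k).eval y / risingProd x k with hA
  have hA0 : A 0 = 1 := by simp [hA, risingProd]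
  have hrec (k : ℕ) : ((x : ℂ) + k + 1) * A (k + 1) = y * A k + k * A k := by
    have hxk : (x : ℂ) + k + 1 ≠ 0 := by exact_mod_cast (by positivity : x + k + 1 ≠ 0)
    have := risingProd_ofReal_ne_zero hx k
    simp only [hA]
    rw [risingProd_succ, ascPochhammer_succ_eval]
    field_simp
  have hshift : y * (∑' k, A k) / x = ∑' k, A (k + 1) :=
    (hasSum_succ_of_recurrence hx0 hsum (hsum.hasSum.mul_left y) hrec).tsum_eq.symm
  have hvalue : ∑' k, A k = x / (x - y) := by
    rw [div_eq_iff hx0] at hshift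
    rw [eq_div_iff hxy]
    linear_combination x * hsum.tsum_eq_zero_add - hshift + x * hA0
  exact hvalue ▸ hsum.hasSum

theorem hasSum_stirlingTail_pow_mul_I_div {x : ℝ} (hx : 0 < x) (β : ℝ) (J : ℕ) :
    HasSum (fun k ↦ stirlingTail ((β * Complex.I) ^ ·) J k / risingProd x k)
      ((β * Complex.I / x) ^ J * (x / (x - β * Complex.I))) := by
  have hx0 : (x : ℂ) ≠ 0 := Complex.ofReal_ne_zero.mpr hx.ne'
  have hxy : (x : ℂ) - β * Complex.I ≠ 0 := fun h ↦ hx.ne' (by simpa using congrArg Complex.re h)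
  have hsum : Summable fun k ↦ stirlingTail ((β * Complex.I) ^ ·) 0 k / risingProd x k :=
    summable_stirlingTail_div_of_le hx zero_le_one <|
      summable_stirlingTail_div_of_norm_le hx (norm_stirlingTail_pow_mul_I_le β le_rfl)
  rw [← hasSum_stirlingTail_div_iff hx J.zero_le]
  simp_rw [stirlingTail_pow_zero] at hsum ⊢
  convert hasSum_ascPochhammer_eval_div hx hxy hsum using 1
  generalize (β * Complex.I : ℂ) = y at hxy ⊢
  have hyx : y / x ≠ 1 := fun h ↦ hxy (by rw [(div_eq_one_iff_eq hx0).mp h, sub_self])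
  have hyx' : y - x ≠ 0 := by rwa [← neg_ne_zero, neg_sub]
  simp_rw [← div_pow]
  rw [← range_eq_Ico, geom_sum_eq hyx]
  field_simp
  ring

/-! ### Fourier series of the Bernoulli generating function -/

/-- The number `β` such that `β * I = 1 / (2 * π * I * n)`; it vanishes at `n = 0` because
`1 / 0 = 0`. -/
noncomputable def invFreq (n : ℤ) : ℝ :=
  -1 / (2 * Real.pi * n)

theorem invFreq_mul_I (n : ℤ) :
    (invFreq n : ℂ) * Complex.I = 1 / (2 * Real.pi * Complex.I * n) := by
  rcases eq_or_ne n 0 with rfl | hn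
  · simp [invFreq]
  · have hn' : (n : ℂ) ≠ 0 := Int.cast_ne_zero.mpr hn
    have hpi : (Real.pi : ℂ) ≠ 0 := Complex.ofReal_ne_zero.mpr Real.pi_ne_zero
    push_cast [invFreq]
    field_simp
    simp

theorem abs_invFreq (n : ℤ) : |invFreq n| = 1 / (2 * Real.pi) * |(n : ℝ)|⁻¹ := by
  rw [invFreq, abs_div, abs_mul, abs_of_pos Real.two_pi_pos, abs_neg, abs_one, div_mul_eq_div_div,
    div_eq_mul_inv]

theorem abs_invFreq_le (n : ℤ) : |invFreq n| ≤ 1 / (2 * Real.pi) := by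
  rw [abs_invFreq]
  refine mul_le_of_le_one_right (by positivity) ?_
  rcases eq_or_ne n 0 with rfl | hn
  · simp
  · exact inv_le_one_of_one_le₀ (by exact_mod_cast Int.one_le_abs hn)

theorem summable_abs_invFreq_pow {J : ℕ} (hJ : 2 ≤ J) : Summable fun n : ℤ ↦ |invFreq n| ^ J := by
  have hJ' : (1 : ℝ) < J := by exact_mod_cast hJ
  refine ((Real.summable_abs_int_rpow hJ').mul_left ((1 / (2 * Real.pi)) ^ J)).congr fun n ↦ ?_
  rw [abs_invFreq, mul_pow, Real.rpow_neg (abs_nonneg _), Real.rpow_natCast, inv_pow]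

theorem norm_fourier_apply {T : ℝ} (n : ℤ) (t : AddCircle T) : ‖fourier n t‖ = 1 := by
  rw [fourier_apply, Circle.norm_coe]

theorem hasSum_fourier_mul_invFreq_pow {j : ℕ} (hj : 2 ≤ j) {θ : ℝ} (hθ : θ ∈ Set.Icc 0 1) :
    HasSum (fun n : ℤ ↦ fourier n (θ : UnitAddCircle) * (invFreq n * Complex.I) ^ j)
      (-(bernoulliFun j θ / j.factorial)) := by
  have h2pi := Complex.two_pi_I_ne_zero
  convert! (hasSum_one_div_pow_mul_fourier_mul_bernoulliFun hj hθ).mul_left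
    (1 / (2 * Real.pi * Complex.I) ^ j) using 1
  · ext n
    rw [invFreq_mul_I, div_pow, mul_pow _ (n : ℂ), one_pow, ← one_div_mul_one_div]
    ring
  · field_simp

/-- The exponential generating function `∑ j, B_j(θ) * l ^ j / j!` of the Bernoulli polynomials
in closed form, which has the junk value `0` at `l = 0`. -/
noncomputable def bernoulliGen (l θ : ℝ) : ℝ :=
  l * Real.exp (l * θ) / (Real.exp l - 1)

/-- The generating function `bernoulliGen` without its terms of degree `0` and `1`. -/
noncomputable def bernoulliGenTail (l θ : ℝ) : ℝ :=
  bernoulliGen l θ - 1 - l * (θ - 1 / 2)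

theorem hasDerivAt_bernoulliGenTail (l t : ℝ) :
    HasDerivAt (bernoulliGenTail l) (l * bernoulliGenTail l t + l ^ 2 * bernoulliFun 1 t) t := by
  have hmul : HasDerivAt (fun t ↦ l * t) l t := by simpa using (hasDerivAt_id t).const_mul l
  convert! (((hmul.exp.const_mul l).div_const (Real.exp l - 1)).sub_const 1).sub
    (((hasDerivAt_id t).sub_const (1 / 2)).const_mul l) using 1
  rw [bernoulliFun_one, bernoulliGenTail, bernoulliGen]
  ring

theorem bernoulliGenTail_one_eq_bernoulliGenTail_zero {l : ℝ} (hl : l ≠ 0) :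
    bernoulliGenTail l 1 = bernoulliGenTail l 0 := by
  have hexp : Real.exp l - 1 ≠ 0 := sub_ne_zero.mpr (by simpa using hl)
  simp only [bernoulliGenTail, bernoulliGen, mul_one, mul_zero, Real.exp_zero]
  field_simp
  ring

theorem fourierCoeffOn_const_mul_add_const_mul {a b : ℝ} (hab : a < b) {f g : ℝ → ℂ}
    (hf : Continuous f) (hg : Continuous g) (c d : ℂ) (n : ℤ) :
    fourierCoeffOn hab (fun t ↦ c * f t + d * g t) n =
      c * fourierCoeffOn hab f n + d * fourierCoeffOn hab g n := by
  have hfourier : Continuous fun t : ℝ ↦ fourier (-n) (t : AddCircle (b - a)) :=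
    (fourier (-n)).continuous.comp (AddCircle.continuous_mk' _)
  rw [← fourierCoeffOn.const_mul, ← fourierCoeffOn.const_mul, fourierCoeffOn_eq_integral,
    fourierCoeffOn_eq_integral, fourierCoeffOn_eq_integral, ← smul_add,
    ← intervalIntegral.integral_add (by apply Continuous.intervalIntegrable; fun_prop)
      (by apply Continuous.intervalIntegrable; fun_prop)]
  simp only [smul_eq_mul, mul_add]

theorem fourierCoeffOn_deriv_of_eq {f f' : ℝ → ℂ} (hf : ∀ t, HasDerivAt f (f' t) t)
    (hf' : IntervalIntegrable f' volume 0 1) (hf01 : f 1 = f 0) (n : ℤ) :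
    fourierCoeffOn zero_lt_one f' n =
      2 * Real.pi * Complex.I * n * fourierCoeffOn zero_lt_one f n := by
  rcases eq_or_ne n 0 with rfl | hn
  · rw [fourierCoeffOn_eq_integral]
    simp only [neg_zero, fourier_zero, one_smul, sub_zero, div_one]
    rw [intervalIntegral.integral_eq_sub_of_hasDerivAt (fun t _ ↦ hf t) hf', hf01]
    simp
  · rw [fourierCoeffOn_of_hasDerivAt zero_lt_one hn (fun t _ ↦ hf t) hf', hf01]
    have hn' : (n : ℂ) ≠ 0 := Int.cast_ne_zero.mpr hn
    have hpi : (Real.pi : ℂ) ≠ 0 := Complex.ofReal_ne_zero.mpr Real.pi_ne_zero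
    push_cast
    field_simp
    simp

theorem continuous_bernoulliGenTail (l : ℝ) : Continuous (bernoulliGenTail l) :=
  continuous_iff_continuousAt.mpr fun t ↦ (hasDerivAt_bernoulliGenTail l t).continuousAt

theorem one_sub_mul_I_mul_ne_zero (β l : ℝ) : (1 : ℂ) - β * Complex.I * l ≠ 0 :=
  fun h ↦ by simpa using congrArg Complex.re h

theorem fourierCoeffOn_bernoulliGenTail {l : ℝ} (hl : l ≠ 0) (n : ℤ) :
    fourierCoeffOn zero_lt_one (fun t ↦ (bernoulliGenTail l t : ℂ)) n =
      -((invFreq n * Complex.I * l) ^ 2 / (1 - invFreq n * Complex.I * l)) := by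
  have hcont : Continuous fun t ↦ (bernoulliGenTail l t : ℂ) :=
    Complex.continuous_ofReal.comp (continuous_bernoulliGenTail l)
  have hcontB : Continuous fun t ↦ (bernoulliFun 1 t : ℂ) :=
    Complex.continuous_ofReal.comp (continuous_bernoulliFun 1)
  set f' : ℝ → ℂ := fun t ↦ l * bernoulliGenTail l t + l ^ 2 * bernoulliFun 1 t with hf'
  have hderiv (t : ℝ) : HasDerivAt (fun t ↦ (bernoulliGenTail l t : ℂ)) (f' t) t := by
    simpa [hf'] using! (hasDerivAt_bernoulliGenTail l t).ofReal_comp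
  have hint : IntervalIntegrable f' volume 0 1 := by
    apply Continuous.intervalIntegrable
    fun_prop
  have hperiodic := bernoulliGenTail_one_eq_bernoulliGenTail_zero hl
  have hB : fourierCoeffOn zero_lt_one (fun t ↦ (bernoulliFun 1 t : ℂ)) n =
      -(invFreq n * Complex.I) := by
    simpa [invFreq_mul_I, neg_div, bernoulliFourierCoeff] using
      bernoulliFourierCoeff_eq one_ne_zero n
  have hlin := fourierCoeffOn_const_mul_add_const_mul zero_lt_one hcont hcontB l (l ^ 2) n
  rw [hB] at hlin
  rw [fourierCoeffOn_deriv_of_eq hderiv hint (by rw [hperiodic])] at hlin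
  rw [← neg_div, eq_div_iff (one_sub_mul_I_mul_ne_zero (invFreq n) l)]
  rcases eq_or_ne n 0 with rfl | hn
  · simpa [invFreq, hl, eq_comm] using hlin
  · have hfreq : 2 * Real.pi * Complex.I * n * (invFreq n * Complex.I) = 1 := by
      rw [invFreq_mul_I, mul_one_div_cancel]
      exact mul_ne_zero Complex.two_pi_I_ne_zero (Int.cast_ne_zero.mpr hn)
    linear_combination invFreq n * Complex.I * hlin -
      fourierCoeffOn zero_lt_one (fun t ↦ (bernoulliGenTail l t : ℂ)) n * hfreq

theorem hasSum_fourier_bernoulliGenTail {l : ℝ} (hl : l ≠ 0) {θ : ℝ} (hθ : θ ∈ Set.Ico 0 1) :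
    HasSum (fun n : ℤ ↦ fourier n (θ : UnitAddCircle) *
        ((invFreq n * Complex.I * l) ^ 2 / (1 - invFreq n * Complex.I * l)))
      (-(bernoulliGenTail l θ : ℂ)) := by
  set f : ℝ → ℂ := fun t ↦ (bernoulliGenTail l t : ℂ) with hf
  let F : C(UnitAddCircle, ℂ) := ⟨AddCircle.liftIco 1 0 f, AddCircle.liftIco_zero_continuous
    (by rw [hf]; simp [bernoulliGenTail_one_eq_bernoulliGenTail_zero hl])
    (Complex.continuous_ofReal.comp (continuous_bernoulliGenTail l)).continuousOn⟩
  have hcoeff (n : ℤ) : fourierCoeff F n =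
      -((invFreq n * Complex.I * l) ^ 2 / (1 - invFreq n * Complex.I * l)) := by
    rw [← fourierCoeffOn_bernoulliGenTail hl n]
    simpa only [zero_add] using! fourierCoeff_liftIco_eq (T := 1) (a := 0) f n
  have hsum : Summable (fourierCoeff F) := by
    refine ((summable_abs_invFreq_pow le_rfl).mul_right (l ^ 2)).of_norm_bounded fun n ↦ ?_
    have hden : 1 ≤ ‖(1 : ℂ) - invFreq n * Complex.I * l‖ :=
      (Complex.abs_re_le_norm _).trans' (by simp)
    rw [hcoeff, norm_neg, norm_div]
    refine (div_le_self (norm_nonneg _) hden).trans_eq ?_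
    simp [mul_pow]
  have hval : F (θ : UnitAddCircle) = f θ := AddCircle.liftIco_zero_coe_apply (f := f) hθ
  convert! (has_pointwise_sum_fourier_series_of_summable hsum (θ : UnitAddCircle)).neg using 1
  · ext n
    rw [hcoeff, smul_eq_mul, neg_mul, neg_neg, mul_comm]
  · rw [hval]

/-- The terms `B_j(θ) * s ^ j / j!` of the generating function of the Bernoulli polynomials. -/
noncomputable def bernoulliTerm (θ s : ℝ) (j : ℕ) : ℂ :=
  bernoulliFun j θ / j.factorial * s ^ j

theorem hasSum_fourier_mul_stirlingTail {J : ℕ} (hJ : 2 ≤ J) {θ : ℝ} (hθ : θ ∈ Set.Icc 0 1)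
    (s : ℝ) (k : ℕ) :
    HasSum (fun n : ℤ ↦ fourier n (θ : UnitAddCircle) *
        stirlingTail (((invFreq n * s : ℝ) * Complex.I) ^ ·) J k)
      (-stirlingTail (bernoulliTerm θ s) J k) := by
  simp_rw [stirlingTail, mul_sum, ← sum_neg_distrib]
  refine hasSum_sum fun j hj ↦ ?_
  convert! (hasSum_fourier_mul_invFreq_pow (hJ.trans (mem_Ico.mp hj).1) hθ).mul_left
    (k.stirlingFirst j * (s : ℂ) ^ j) using 1
  · ext n
    push_cast
    ring
  · rw [bernoulliTerm]
    ring

theorem norm_stirlingTail_invFreq_le {J : ℕ} (hJ : 1 ≤ J) {s : ℝ} (hs : 0 ≤ s) (n : ℤ) (k : ℕ) :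
    ‖stirlingTail (((invFreq n * s : ℝ) * Complex.I) ^ ·) J k‖ ≤
      |invFreq n| ^ J * (s ^ J * Real.exp (s / 4) * k.stirlingFirst J) := by
  have hexponent : Real.pi * (|invFreq n| * s) / 2 ≤ s / 4 := by
    calc Real.pi * (|invFreq n| * s) / 2 ≤ Real.pi * (1 / (2 * Real.pi) * s) / 2 := by
          gcongr
          exact abs_invFreq_le n
      _ = s / 4 := by field_simp; ring
  calc _ ≤ |invFreq n * s| ^ J * Real.exp (Real.pi * |invFreq n * s| / 2) * k.stirlingFirst J :=
        norm_stirlingTail_pow_mul_I_le _ hJ k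
    _ ≤ (|invFreq n| * s) ^ J * Real.exp (s / 4) * k.stirlingFirst J := by
        rw [abs_mul, abs_of_nonneg hs]
        gcongr
    _ = _ := by ring

theorem norm_stirlingTail_bernoulliTerm_le {J : ℕ} (hJ : 2 ≤ J) {θ : ℝ} (hθ : θ ∈ Set.Icc 0 1)
    {s : ℝ} (hs : 0 ≤ s) (k : ℕ) :
    ‖stirlingTail (bernoulliTerm θ s) J k‖ ≤
      (∑' n, |invFreq n| ^ J) * (s ^ J * Real.exp (s / 4) * k.stirlingFirst J) := by
  rw [← norm_neg, ← (hasSum_fourier_mul_stirlingTail hJ hθ s k).tsum_eq]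
  refine tsum_of_norm_bounded ((summable_abs_invFreq_pow hJ).hasSum.mul_right _) fun n ↦ ?_
  rw [norm_mul, norm_fourier_apply, one_mul]
  exact norm_stirlingTail_invFreq_le (one_le_two.trans hJ) hs n k

theorem hasSum_stirlingTail_bernoulliTerm_div {x : ℝ} (hx : 0 < x) {s : ℝ} (hs : 0 < s) {θ : ℝ}
    (hθ : θ ∈ Set.Ico 0 1) :
    HasSum (fun k ↦ stirlingTail (bernoulliTerm θ s) 2 k / risingProd x k)
      (bernoulliGenTail (s / x) θ) := by
  have hx0 : (x : ℂ) ≠ 0 := Complex.ofReal_ne_zero.mpr hx.ne'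
  set f : ℤ × ℕ → ℂ := fun p ↦ fourier p.1 (θ : UnitAddCircle) *
    (stirlingTail (((invFreq p.1 * s : ℝ) * Complex.I) ^ ·) 2 p.2 / risingProd x p.2) with hf
  have hsum : Summable f := by
    refine ((summable_abs_invFreq_pow le_rfl).mul_of_nonneg
      ((summable_stirlingFirst_div_risingProdR hx 2).mul_left (s ^ 2 * Real.exp (s / 4)))
      (fun n ↦ by positivity) fun k ↦ ?_).of_norm_bounded fun p ↦ ?_
    · have := risingProdR_pos hx k
      positivity
    · rw [hf, norm_mul, norm_fourier_apply, one_mul, ← mul_assoc]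
      refine norm_stirlingTail_div_le hx ?_
      rw [mul_assoc]
      exact norm_stirlingTail_invFreq_le one_le_two hs.le p.1 p.2
  have hfiber (n : ℤ) : HasSum (fun k ↦ f (n, k)) (fourier n (θ : UnitAddCircle) *
      ((invFreq n * Complex.I * (s / x : ℝ)) ^ 2 / (1 - invFreq n * Complex.I * (s / x : ℝ)))) := by
    convert! (hasSum_stirlingTail_pow_mul_I_div hx (invFreq n * s) 2).mul_left
      (fourier n (θ : UnitAddCircle)) using 2
    have hden := one_sub_mul_I_mul_ne_zero (invFreq n) (s / x)
    push_cast at hden ⊢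
    rw [show invFreq n * s * Complex.I / x = invFreq n * Complex.I * (s / x) by ring,
      show (x : ℂ) - invFreq n * s * Complex.I = x * (1 - invFreq n * Complex.I * (s / x)) by
        field_simp, div_mul_cancel_left₀ hx0, div_eq_mul_inv]
  have htotal : ∑' p, f p = -bernoulliGenTail (s / x) θ :=
    (hsum.hasSum.prod_fiberwise hfiber).unique
      (hasSum_fourier_bernoulliGenTail (div_pos hs hx).ne' hθ)
  have hswap := (Equiv.prodComm ℕ ℤ).hasSum_iff.mpr hsum.hasSum
  rw [htotal] at hswap
  have := hswap.prod_fiberwise fun k ↦ by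
    simpa [hf, mul_div_assoc] using!
      (hasSum_fourier_mul_stirlingTail le_rfl (Set.Ico_subset_Icc_self hθ) s k).div_const
        (risingProd x k)
  simpa [neg_div] using this.neg

/-! ### Integration against the Gamma kernel -/

/-- The coefficients of the asymptotic expansion
`z * x ^ z * ∑ i ≥ 1, (x - θ + i) ^ (-z - 1) ∼ ∑ j, hurwitzCoeff z θ j * x ^ (-j)`
of the Hurwitz zeta function. -/
noncomputable def hurwitzCoeff (z : ℂ) (θ : ℝ) (j : ℕ) : ℂ :=
  (ascPochhammer ℂ j).eval z / j.factorial * bernoulliFun j θ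

/-- The integrand of Euler's integral for `Complex.Gamma z`. -/
noncomputable def gammaKernel (z : ℂ) (s : ℝ) : ℂ :=
  Real.exp (-s) * s ^ (z - 1)

theorem integrableOn_gammaKernel {z : ℂ} (hz : 0 < z.re) :
    IntegrableOn (gammaKernel z) (Set.Ioi 0) :=
  Complex.GammaIntegral_convergent hz

theorem integral_gammaKernel {z : ℂ} (hz : 0 < z.re) :
    ∫ s in Set.Ioi 0, gammaKernel z s = Complex.Gamma z :=
  (Complex.Gamma_eq_integral hz).symm

theorem gammaKernel_mul_pow (z : ℂ) (j : ℕ) {s : ℝ} (hs : 0 < s) :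
    gammaKernel z s * s ^ j = gammaKernel (z + j) s := by
  have hs0 : (s : ℂ) ≠ 0 := Complex.ofReal_ne_zero.mpr hs.ne'
  rw [gammaKernel, gammaKernel, add_sub_right_comm, Complex.cpow_add _ _ hs0,
    Complex.cpow_natCast, mul_assoc]

theorem norm_gammaKernel (z : ℂ) {s : ℝ} (hs : 0 < s) :
    ‖gammaKernel z s‖ = Real.exp (-s) * s ^ (z.re - 1) := by
  rw [gammaKernel, norm_mul, Complex.norm_real, Real.norm_of_nonneg (Real.exp_pos _).le,
    Complex.norm_cpow_eq_rpow_re_of_pos hs, Complex.sub_re, Complex.one_re]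

theorem inv_Gamma_eq_ascPochhammer_eval_mul (z : ℂ) (n : ℕ) :
    (Complex.Gamma z)⁻¹ = (ascPochhammer ℂ n).eval z * (Complex.Gamma (z + n))⁻¹ := by
  induction n with
  | zero => simp
  | succ n ih =>
    rw [ih, Complex.one_div_Gamma_eq_self_mul_one_div_Gamma_add_one (z + n),
      ascPochhammer_succ_eval]
    push_cast
    ring_nf

theorem ascPochhammer_eval_eq_inv_Gamma_mul {z : ℂ} {n : ℕ} (h : 0 < z.re + n) :
    (ascPochhammer ℂ n).eval z = (Complex.Gamma z)⁻¹ * Complex.Gamma (z + n) := by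
  rw [inv_Gamma_eq_ascPochhammer_eval_mul z n, inv_mul_cancel_right₀]
  exact Complex.Gamma_ne_zero_of_re_pos (by simpa using h)

section GammaIntegral

variable {θ : ℝ} {z : ℂ} {J : ℕ}

theorem gammaKernel_mul_stirlingTail (k : ℕ) {s : ℝ} (hs : 0 < s) :
    gammaKernel z s * stirlingTail (bernoulliTerm θ s) J k =
      ∑ j ∈ Ico J (k + 1),
        k.stirlingFirst j * (bernoulliFun j θ / j.factorial) * gammaKernel (z + j) s := by
  rw [stirlingTail, mul_sum]
  refine sum_congr rfl fun j _ ↦ ?_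
  rw [bernoulliTerm, ← gammaKernel_mul_pow z j hs]
  ring

theorem re_add_natCast_pos {j : ℕ} (h : 0 < z.re + J) (hj : J ≤ j) : 0 < (z + j).re := by
  have : (J : ℝ) ≤ j := Nat.cast_le.mpr hj
  rw [Complex.add_re, Complex.natCast_re]
  linarith

theorem integrableOn_gammaKernel_mul_stirlingTail (h : 0 < z.re + J) (k : ℕ) :
    IntegrableOn (fun s ↦ gammaKernel z s * stirlingTail (bernoulliTerm θ s) J k) (Set.Ioi 0) := by
  refine IntegrableOn.congr_fun ?_ (fun s hs ↦ (gammaKernel_mul_stirlingTail k hs).symm)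
    measurableSet_Ioi
  exact integrable_finsetSum _ fun j hj ↦
    (integrableOn_gammaKernel (re_add_natCast_pos h (mem_Ico.mp hj).1)).const_mul _

theorem stirlingTail_hurwitzCoeff_eq_integral (h : 0 < z.re + J) (k : ℕ) :
    stirlingTail (hurwitzCoeff z θ) J k = (Complex.Gamma z)⁻¹ *
      ∫ s in Set.Ioi 0, gammaKernel z s * stirlingTail (bernoulliTerm θ s) J k := by
  rw [setIntegral_congr_fun measurableSet_Ioi fun s hs ↦ gammaKernel_mul_stirlingTail k hs,
    integral_finsetSum _ fun j hj ↦
      (integrableOn_gammaKernel (re_add_natCast_pos h (mem_Ico.mp hj).1)).const_mul _,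
    stirlingTail, mul_sum]
  refine sum_congr rfl fun j hj ↦ ?_
  have hj := re_add_natCast_pos h (mem_Ico.mp hj).1
  rw [integral_const_mul, integral_gammaKernel hj, hurwitzCoeff,
    ascPochhammer_eval_eq_inv_Gamma_mul (by simpa using hj)]
  ring

theorem norm_gammaKernel_mul_stirlingTail_le (hJ : 2 ≤ J) (hθ : θ ∈ Set.Icc 0 1) (k : ℕ) {s : ℝ}
    (hs : 0 < s) :
    ‖gammaKernel z s * stirlingTail (bernoulliTerm θ s) J k‖ ≤
      (∑' n, |invFreq n| ^ J) * k.stirlingFirst J *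
        (s ^ (z.re + J - 1) * Real.exp (-(3 / 4 * s))) := by
  have hpow : s ^ (z.re + J - 1) = s ^ (z.re - 1) * s ^ J := by
    rw [← Real.rpow_natCast, ← Real.rpow_add hs, add_sub_right_comm]
  have hexp : Real.exp (-(3 / 4 * s)) = Real.exp (-s) * Real.exp (s / 4) := by
    rw [← Real.exp_add]
    ring_nf
  rw [norm_mul, norm_gammaKernel z hs, hpow, hexp]
  calc _ ≤ Real.exp (-s) * s ^ (z.re - 1) *
        ((∑' n, |invFreq n| ^ J) * (s ^ J * Real.exp (s / 4) * k.stirlingFirst J)) := by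
        gcongr
        exact norm_stirlingTail_bernoulliTerm_le hJ hθ hs.le k
    _ = _ := by ring

theorem integral_norm_gammaKernel_mul_stirlingTail_le (hJ : 2 ≤ J) (hθ : θ ∈ Set.Icc 0 1)
    (h : 0 < z.re + J) (k : ℕ) :
    ∫ s in Set.Ioi 0, ‖gammaKernel z s * stirlingTail (bernoulliTerm θ s) J k‖ ≤
      (∑' n, |invFreq n| ^ J) * k.stirlingFirst J *
        ((1 / (3 / 4)) ^ (z.re + J) * Real.Gamma (z.re + J)) := by
  have hint : IntegrableOn (fun s : ℝ ↦ s ^ (z.re + J - 1) * Real.exp (-(3 / 4 * s)))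
      (Set.Ioi 0) := by
    simpa [neg_mul] using integrableOn_rpow_mul_exp_neg_mul_rpow (s := z.re + J - 1) (p := 1)
      (b := 3 / 4) (by linarith) one_pos (by norm_num)
  rw [← Real.integral_rpow_mul_exp_neg_mul_Ioi h (by norm_num), ← integral_const_mul]
  exact setIntegral_mono_on (integrableOn_gammaKernel_mul_stirlingTail h k).norm
    (hint.const_mul _) measurableSet_Ioi
    fun s hs ↦ norm_gammaKernel_mul_stirlingTail_le hJ hθ k hs

/-- The factor in front of the Stirling number in the estimate
`norm_stirlingTail_hurwitzCoeff_le`. -/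
noncomputable def hurwitzTailBound (J : ℕ) (z : ℂ) : ℝ :=
  ‖(Complex.Gamma z)⁻¹‖ * ((1 / (3 / 4)) ^ (z.re + J) * Real.Gamma (z.re + J)) *
    ∑' n, |invFreq n| ^ J

theorem norm_stirlingTail_hurwitzCoeff_le (hJ : 2 ≤ J) (hθ : θ ∈ Set.Icc 0 1)
    (h : 0 < z.re + J) (k : ℕ) :
    ‖stirlingTail (hurwitzCoeff z θ) J k‖ ≤ hurwitzTailBound J z * k.stirlingFirst J := by
  rw [stirlingTail_hurwitzCoeff_eq_integral h, norm_mul]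
  calc _ ≤ ‖(Complex.Gamma z)⁻¹‖ * ((∑' n, |invFreq n| ^ J) * k.stirlingFirst J *
        ((1 / (3 / 4)) ^ (z.re + J) * Real.Gamma (z.re + J))) := by
        gcongr
        exact (norm_integral_le_integral_norm _).trans
          (integral_norm_gammaKernel_mul_stirlingTail_le hJ hθ h k)
    _ = _ := by rw [hurwitzTailBound]; ring

theorem continuousAt_hurwitzTailBound (h : 0 < z.re + J) :
    ContinuousAt (hurwitzTailBound J) z := by
  have hinv : ContinuousAt (fun z ↦ (Complex.Gamma z)⁻¹) z :=
    Complex.differentiable_one_div_Gamma.continuous.continuousAt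
  have hre : ContinuousAt (fun z : ℂ ↦ z.re + J) z := by fun_prop
  have hGamma : ContinuousAt (fun z : ℂ ↦ Real.Gamma (z.re + J)) z :=
    ContinuousAt.comp (f := fun z : ℂ ↦ z.re + J)
      (Real.differentiableOn_Gamma_Ioi.continuousOn.continuousAt (Ioi_mem_nhds h)) hre
  exact (hinv.norm.mul ((continuousAt_const.rpow hre (Or.inl (by norm_num))).mul hGamma)).mul
    continuousAt_const

theorem exists_natCast_add_pos (J : ℕ) (r : ℝ) : ∃ J', J ≤ J' ∧ 2 ≤ J' ∧ 0 < r + (J' : ℝ) := by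
  obtain ⟨n, hn⟩ := exists_nat_gt (-r)
  refine ⟨J + n + 2, by lia, by lia, ?_⟩
  push_cast
  linarith [J.cast_nonneg (α := ℝ)]

theorem summable_stirlingTail_hurwitzCoeff_div {x : ℝ} (hx : 0 < x) (hθ : θ ∈ Set.Icc 0 1)
    (z : ℂ) (J : ℕ) :
    Summable fun k ↦ stirlingTail (hurwitzCoeff z θ) J k / risingProd x k := by
  obtain ⟨J', hJJ', hJ', hz⟩ := exists_natCast_add_pos J z.re
  exact summable_stirlingTail_div_of_le hx hJJ' <|
    summable_stirlingTail_div_of_norm_le hx (norm_stirlingTail_hurwitzCoeff_le hJ' hθ hz)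

theorem differentiable_hurwitzCoeff (θ : ℝ) (j : ℕ) :
    Differentiable ℂ fun z ↦ hurwitzCoeff z θ j :=
  ((ascPochhammer ℂ j).differentiable.div_const _).mul_const _

theorem differentiable_factorialSeries_hurwitzCoeff {x : ℝ} (hx : 0 < x) (hθ : θ ∈ Set.Icc 0 1)
    (J : ℕ) : Differentiable ℂ fun z ↦ factorialSeries (hurwitzCoeff z θ) J x := by
  intro z₀
  obtain ⟨J', hJJ', hJ', hz₀⟩ := exists_natCast_add_pos J z₀.re
  have hev : ∀ᶠ z : ℂ in 𝓝 z₀, (0 : ℝ) < z.re + J' ∧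
      hurwitzTailBound J' z < hurwitzTailBound J' z₀ + 1 :=
    ((show ContinuousAt (fun z : ℂ ↦ z.re + J') z₀ by fun_prop).eventually_const_lt hz₀).and
      ((continuousAt_hurwitzTailBound hz₀).eventually_lt_const (lt_add_one _))
  obtain ⟨U, hU, hUo, hz₀U⟩ := eventually_nhds_iff.mp hev
  have htail : DifferentiableOn ℂ (fun z ↦ factorialSeries (hurwitzCoeff z θ) J' x) U := by
    refine Complex.differentiableOn_tsum_of_summable_norm
      ((summable_stirlingFirst_div_risingProdR hx J').mul_left (hurwitzTailBound J' z₀ + 1))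
      (fun k ↦ ?_) hUo fun k z hz ↦ norm_stirlingTail_div_le hx ?_
    · refine (Differentiable.div_const ?_ _).differentiableOn
      exact Differentiable.fun_sum fun j _ ↦ (differentiable_hurwitzCoeff θ j).const_mul _
    · refine (norm_stirlingTail_hurwitzCoeff_le hJ' hθ (hU z hz).1 k).trans ?_
      gcongr
      exact (hU z hz).2.le
  simp_rw [factorialSeries_eq_sum_add hx hJJ' (summable_stirlingTail_hurwitzCoeff_div hx hθ _ J')]
  refine DifferentiableAt.add ?_ (htail.differentiableAt (hUo.mem_nhds hz₀U))
  exact DifferentiableAt.fun_sum fun j _ ↦ ((differentiable_hurwitzCoeff θ j) z₀).div_const _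

end GammaIntegral

theorem factorialSeries_hurwitzCoeff_two {x : ℝ} (hx : 0 < x) {θ : ℝ} (hθ : θ ∈ Set.Ico 0 1)
    {z : ℂ} (hz : 0 < z.re + 2) :
    factorialSeries (hurwitzCoeff z θ) 2 x = (Complex.Gamma z)⁻¹ *
      ∫ s in Set.Ioi 0, gammaKernel z s * bernoulliGenTail (s / x) θ := by
  have hθ' := Set.Ico_subset_Icc_self hθ
  set F : ℕ → ℝ → ℂ := fun k s ↦
    gammaKernel z s * stirlingTail (bernoulliTerm θ s) 2 k / risingProd x k with hF
  have hint (k : ℕ) : IntegrableOn (F k) (Set.Ioi 0) :=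
    (integrableOn_gammaKernel_mul_stirlingTail hz k).div_const _
  have hsum : Summable fun k ↦ ∫ s in Set.Ioi 0, ‖F k s‖ := by
    refine Summable.of_nonneg_of_le (fun k ↦ integral_nonneg fun s ↦ norm_nonneg _) (fun k ↦ ?_)
      ((summable_stirlingFirst_div_risingProdR hx 2).mul_left
        ((∑' n, |invFreq n| ^ 2) * ((1 / (3 / 4)) ^ (z.re + 2) * Real.Gamma (z.re + 2))))
    simp_rw [hF, norm_div, norm_risingProd_ofReal hx]
    rw [integral_div, ← mul_div_assoc]
    have := risingProdR_pos hx k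
    gcongr
    exact (integral_norm_gammaKernel_mul_stirlingTail_le le_rfl hθ' hz k).trans_eq
      (by push_cast; ring)
  have hswap := (hasSum_integral_of_summable_integral_norm hint hsum).mul_left (Complex.Gamma z)⁻¹
  have hvalue : ∫ s in Set.Ioi 0, ∑' k, F k s =
      ∫ s in Set.Ioi 0, gammaKernel z s * bernoulliGenTail (s / x) θ := by
    refine setIntegral_congr_fun measurableSet_Ioi fun s hs ↦ ?_
    simp_rw [hF, mul_div_assoc]
    exact ((hasSum_stirlingTail_bernoulliTerm_div hx hs hθ).mul_left _).tsum_eq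
  rw [factorialSeries, ← hvalue, ← hswap.tsum_eq]
  refine tsum_congr fun k ↦ ?_
  rw [stirlingTail_hurwitzCoeff_eq_integral hz, integral_div, mul_div_assoc]

/-! ### The Hurwitz sum as an integral -/

section HurwitzIntegral

variable {l θ x : ℝ} {z : ℂ}

theorem exp_sub_one_pos (hl : 0 < l) : 0 < Real.exp l - 1 :=
  sub_pos.mpr (Real.one_lt_exp_iff.mpr hl)

theorem bernoulliGen_nonneg (hl : 0 < l) : 0 ≤ bernoulliGen l θ :=
  div_nonneg (by positivity) (exp_sub_one_pos hl).le

theorem bernoulliGen_le (hl : 0 < l) (hθ : θ ≤ 1) : bernoulliGen l θ ≤ 1 + l := by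
  rw [bernoulliGen, div_le_iff₀ (exp_sub_one_pos hl)]
  calc l * Real.exp (l * θ) ≤ l * Real.exp l := by
        gcongr
        exact mul_le_of_le_one_right hl.le hθ
    _ ≤ (1 + l) * (Real.exp l - 1) := by linarith [Real.add_one_le_exp l]

theorem continuousOn_gammaKernel_mul_bernoulliGen (hx : 0 < x) :
    ContinuousOn (fun s ↦ gammaKernel z s * bernoulliGen (s / x) θ) (Set.Ioi 0) := by
  intro s hs
  have hexp : Real.exp (s / x) - 1 ≠ 0 := (exp_sub_one_pos (div_pos hs hx)).ne'
  have hcpow : ContinuousAt (fun s : ℝ ↦ (s : ℂ) ^ (z - 1)) s :=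
    Complex.continuousAt_ofReal_cpow_const s _ (Or.inr (ne_of_gt hs))
  have hgen : ContinuousAt (fun s ↦ bernoulliGen (s / x) θ) s :=
    ContinuousAt.div (by fun_prop) (by fun_prop) hexp
  exact ((ContinuousAt.mul (by fun_prop) hcpow).mul hgen.ofReal).continuousWithinAt

theorem gammaKernel_mul_self (z : ℂ) {s : ℝ} (hs : 0 < s) :
    gammaKernel z s * s = gammaKernel (z + 1) s := by
  simpa using gammaKernel_mul_pow z 1 hs

theorem norm_gammaKernel_mul_bernoulliGen_le (hx : 0 < x) (hθ : θ ≤ 1) {s : ℝ} (hs : 0 < s) :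
    ‖gammaKernel z s * bernoulliGen (s / x) θ‖ ≤
      ‖gammaKernel z s‖ + ‖gammaKernel (z + 1) s‖ / x := by
  have hsx : 0 < s / x := div_pos hs hx
  rw [← gammaKernel_mul_self z hs, norm_mul, norm_mul, Complex.norm_of_nonneg hs.le,
    Complex.norm_of_nonneg (bernoulliGen_nonneg hsx), mul_div_assoc, ← mul_one_add]
  gcongr
  exact bernoulliGen_le hsx hθ

theorem integrableOn_gammaKernel_mul_bernoulliGen (hx : 0 < x) (hθ : θ ≤ 1) (hz : 0 < z.re) :
    IntegrableOn (fun s ↦ gammaKernel z s * bernoulliGen (s / x) θ) (Set.Ioi 0) := by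
  have hz' : 0 < (z + 1).re := add_pos hz one_pos
  refine ((integrableOn_gammaKernel hz).norm.add
    ((integrableOn_gammaKernel hz').norm.div_const x)).mono'
    ((continuousOn_gammaKernel_mul_bernoulliGen hx).aestronglyMeasurable measurableSet_Ioi) ?_
  exact (ae_restrict_iff' measurableSet_Ioi).mpr <|
    .of_forall fun s hs ↦ norm_gammaKernel_mul_bernoulliGen_le hx hθ hs

theorem integral_gammaKernel_mul_bernoulliGen_eq (hx : 0 < x) (hθ : θ ≤ 1) (hz : 0 < z.re) :
    ∫ s in Set.Ioi 0, gammaKernel z s * bernoulliGen (s / x) θ =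
      Complex.Gamma z + (θ - 1 / 2) / x * Complex.Gamma (z + 1) +
        ∫ s in Set.Ioi 0, gammaKernel z s * bernoulliGenTail (s / x) θ := by
  have hz' : 0 < (z + 1).re := add_pos hz one_pos
  have hint := integrableOn_gammaKernel hz
  have hint' : IntegrableOn (fun s ↦ (θ - 1 / 2) / x * gammaKernel (z + 1) s) (Set.Ioi 0) :=
    (integrableOn_gammaKernel hz').const_mul _
  have hhead : ∫ s in Set.Ioi 0, (gammaKernel z s + (θ - 1 / 2) / x * gammaKernel (z + 1) s) =
      Complex.Gamma z + (θ - 1 / 2) / x * Complex.Gamma (z + 1) := by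
    rw [integral_add hint hint', integral_const_mul, integral_gammaKernel hz,
      integral_gammaKernel hz']
  have hsplit : Set.EqOn (fun s ↦ gammaKernel z s * bernoulliGenTail (s / x) θ)
      (fun s ↦ gammaKernel z s * bernoulliGen (s / x) θ -
        (gammaKernel z s + (θ - 1 / 2) / x * gammaKernel (z + 1) s)) (Set.Ioi 0) := by
    intro s hs
    simp only [bernoulliGenTail]
    rw [← gammaKernel_mul_self z hs]
    push_cast
    ring
  rw [setIntegral_congr_fun measurableSet_Ioi hsplit,
    integral_sub (integrableOn_gammaKernel_mul_bernoulliGen hx hθ hz) (hint.fun_add hint'),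
    hhead, add_sub_cancel]

theorem factorialSeries_hurwitzCoeff_zero_eq_integral (hx : 0 < x) (hθ : θ ∈ Set.Ico 0 1)
    (hz : 0 < z.re) :
    factorialSeries (hurwitzCoeff z θ) 0 x = (Complex.Gamma z)⁻¹ *
      ∫ s in Set.Ioi 0, gammaKernel z s * bernoulliGen (s / x) θ := by
  have hz0 : z ≠ 0 := fun h ↦ hz.ne' (by simp [h])
  have hGamma : Complex.Gamma z ≠ 0 := Complex.Gamma_ne_zero_of_re_pos hz
  have hhead : ∑ j ∈ Ico 0 2, hurwitzCoeff z θ j / (x : ℂ) ^ j = 1 + z * (θ - 1 / 2) / x := by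
    simp [sum_range_succ, hurwitzCoeff, bernoulliFun_one]
  rw [factorialSeries_eq_sum_add hx zero_le_two
      (summable_stirlingTail_hurwitzCoeff_div hx (Set.Ico_subset_Icc_self hθ) z 2), hhead,
    factorialSeries_hurwitzCoeff_two hx hθ (by linarith),
    integral_gammaKernel_mul_bernoulliGen_eq hx hθ.2.le hz, Complex.Gamma_add_one z hz0]
  field_simp

theorem hasSum_exp_neg_mul (y : ℝ) (hl : 0 < l) :
    HasSum (fun i : ℕ ↦ Real.exp (-(y + i + 1) * l)) (Real.exp (-y * l) / (Real.exp l - 1)) := by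
  have hgeom := (hasSum_geometric_of_lt_one (Real.exp_pos (-l)).le
    (Real.exp_lt_one_iff.mpr (neg_lt_zero.mpr hl))).mul_left (Real.exp (-(y + 1) * l))
  have hexp := exp_sub_one_pos hl
  convert! hgeom using 1
  · ext i
    rw [← Real.exp_nat_mul, ← Real.exp_add]
    ring_nf
  · have hsplit : Real.exp (-(y + 1) * l) = Real.exp (-y * l) / Real.exp l := by
      rw [← Real.exp_sub]
      ring_nf
    rw [hsplit, Real.exp_neg]
    field_simp

theorem hasSum_mellin_exp_div_exp_sub_one {y : ℝ} (hy : -1 < y) (hz : 1 < z.re) :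
    HasSum (fun i : ℕ ↦ Complex.Gamma z / ((y + i + 1 : ℝ) : ℂ) ^ z)
      (mellin (fun t ↦ ((Real.exp (-y * t) / (Real.exp t - 1) : ℝ) : ℂ)) z) := by
  have hpos (i : ℕ) : 0 < y + i + 1 := by linarith [i.cast_nonneg (α := ℝ)]
  have hsum : Summable fun i : ℕ ↦ ‖(1 : ℂ)‖ / (y + i + 1) ^ z.re := by
    refine ((Real.summable_one_div_nat_add_rpow (y + 1) z.re).mpr hz).congr fun i ↦ ?_
    rw [norm_one, ← abs_of_pos (hpos i)]
    ring_nf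
  convert! hasSum_mellin (a := fun _ : ℕ ↦ (1 : ℂ)) (fun i ↦ Or.inr (hpos i)) (by linarith)
    (fun t ht ↦ ?_) hsum using 1
  · simp_rw [mul_one]
  · simpa using! Complex.hasSum_ofReal.mpr (hasSum_exp_neg_mul y ht)

theorem integral_gammaKernel_mul_bernoulliGen (hx : 0 < x) (hθ : θ < 1) (hz : 0 < z.re) :
    ∫ s in Set.Ioi 0, gammaKernel z s * bernoulliGen (s / x) θ =
      Complex.Gamma (z + 1) * (x : ℂ) ^ z *
        ∑' i : ℕ, 1 / ((x - θ + i + 1 : ℝ) : ℂ) ^ (z + 1) := by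
  set G : ℝ → ℂ := fun t ↦ ((Real.exp (-(x - θ) * t) / (Real.exp t - 1) : ℝ) : ℂ) with hG
  have hx0 : (x : ℂ) ≠ 0 := Complex.ofReal_ne_zero.mpr hx.ne'
  have hkernel : ∫ s in Set.Ioi 0, gammaKernel z s * bernoulliGen (s / x) θ =
      (x : ℂ)⁻¹ * mellin (fun s ↦ G (x⁻¹ * s)) (z + 1) := by
    rw [mellin, ← integral_const_mul]
    refine setIntegral_congr_fun measurableSet_Ioi fun s hs ↦ ?_
    have hs0 : (s : ℂ) ≠ 0 := Complex.ofReal_ne_zero.mpr (ne_of_gt hs)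
    have hexp : Real.exp (-(x - θ) * (s / x)) = Real.exp (-s) * Real.exp (s / x * θ) := by
      rw [← Real.exp_add]
      congr 1
      field_simp
      ring
    simp only [hG, smul_eq_mul, gammaKernel, bernoulliGen, inv_mul_eq_div, hexp]
    rw [add_sub_right_comm, Complex.cpow_add _ _ hs0, Complex.cpow_one]
    push_cast
    ring
  have hz' : 1 < (z + 1).re := by simpa using hz
  have harg : (x : ℂ).arg ≠ Real.pi :=
    (Complex.arg_ofReal_of_nonneg hx.le).trans_ne Real.pi_ne_zero.symm
  rw [hkernel, mellin_comp_mul_left G _ (inv_pos.mpr hx),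
    ← (hasSum_mellin_exp_div_exp_sub_one (by linarith) hz').tsum_eq]
  rw [Complex.ofReal_inv, Complex.inv_cpow _ _ harg, Complex.cpow_neg, inv_inv,
    Complex.cpow_add _ _ hx0, Complex.cpow_one, smul_eq_mul]
  simp_rw [div_eq_mul_one_div (Complex.Gamma _)]
  rw [tsum_mul_left]
  field_simp

theorem factorialSeries_hurwitzCoeff_zero (hx : 0 < x) (hθ : θ ∈ Set.Ico 0 1) (hz : 0 < z.re) :
    factorialSeries (hurwitzCoeff z θ) 0 x =
      z * (x : ℂ) ^ z * ∑' i : ℕ, 1 / ((x - θ + i + 1 : ℝ) : ℂ) ^ (z + 1) := by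
  have hz0 : z ≠ 0 := fun h ↦ hz.ne' (by simp [h])
  have hGamma : Complex.Gamma z ≠ 0 := Complex.Gamma_ne_zero_of_re_pos hz
  rw [factorialSeries_hurwitzCoeff_zero_eq_integral hx hθ hz,
    integral_gammaKernel_mul_bernoulliGen hx hθ.2 hz, Complex.Gamma_add_one z hz0]
  field_simp

end HurwitzIntegral

/-! ### Analytic continuation -/

theorem tsum_one_div_natCast_add_cpow (N : ℕ) {s : ℂ} (hs : 1 < s.re) :
    ∑' i : ℕ, 1 / ((N + i + 1 : ℕ) : ℂ) ^ s = riemannZeta s - ∑ k ∈ Icc 1 N, 1 / (k : ℂ) ^ s := by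
  have hs0 : s ≠ 0 := fun h ↦ by norm_num [h] at hs
  have hshift (i : ℕ) : N + i + 1 = i + (N + 1) := by ring
  simp_rw [hshift]
  rw [zeta_eq_tsum_one_div_nat_cpow hs, eq_sub_iff_add_eq', ← Ico_add_one_right_eq_Icc,
    ← (Complex.summable_one_div_nat_cpow.mpr hs).sum_add_tsum_nat_add (N + 1), range_eq_Ico,
    sum_eq_sum_Ico_succ_bot (Nat.add_one_pos N), Nat.cast_zero, Complex.zero_cpow hs0, div_zero,
    zero_add]

theorem factorialSeries_hurwitzCoeff_fract_of_re_pos {x : ℝ} (hx : 0 < x) {z : ℂ}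
    (hz : 0 < z.re) :
    factorialSeries (hurwitzCoeff z (Int.fract x)) 0 x = z * (x : ℂ) ^ z *
      (riemannZeta (z + 1) - ∑ k ∈ Icc 1 ⌊x⌋₊, 1 / (k : ℂ) ^ (z + 1)) := by
  have hfloor : x - Int.fract x = ⌊x⌋₊ := by
    rw [Int.self_sub_fract, natCast_floor_eq_intCast_floor hx.le]
  rw [factorialSeries_hurwitzCoeff_zero hx ⟨Int.fract_nonneg x, Int.fract_lt_one x⟩ hz, hfloor,
    ← tsum_one_div_natCast_add_cpow _ (by simpa using hz)]
  norm_cast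

theorem isPreconnected_compl_singleton_complex (c : ℂ) : IsPreconnected ({c}ᶜ : Set ℂ) :=
  (isConnected_compl_singleton_of_one_lt_rank
    (Complex.rank_real_complex ▸ Cardinal.one_lt_two) c).isPreconnected

theorem differentiableOn_mul_riemannZeta_sub_sum {x : ℝ} (hx : 0 < x) (N : ℕ) :
    DifferentiableOn ℂ (fun z ↦ z * (x : ℂ) ^ z *
      (riemannZeta (z + 1) - ∑ k ∈ Icc 1 N, 1 / (k : ℂ) ^ (z + 1))) {0}ᶜ := by
  intro z hz
  have hx0 : (x : ℂ) ≠ 0 := Complex.ofReal_ne_zero.mpr hx.ne'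
  have hadd : DifferentiableAt ℂ (fun z : ℂ ↦ z + 1) z := by fun_prop
  have hzeta : DifferentiableAt ℂ (fun z ↦ riemannZeta (z + 1)) z :=
    (differentiableAt_riemannZeta (by simpa using hz)).comp z hadd
  have hpow : DifferentiableAt ℂ (fun z : ℂ ↦ (x : ℂ) ^ z) z :=
    differentiableAt_id.const_cpow (Or.inl hx0)
  have hsum : DifferentiableAt ℂ (fun z ↦ ∑ k ∈ Icc 1 N, 1 / (k : ℂ) ^ (z + 1)) z := by
    refine DifferentiableAt.fun_sum fun k hk ↦ ?_
    have hk0 : (k : ℂ) ≠ 0 := Nat.cast_ne_zero.mpr (by grind)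
    exact (differentiableAt_const 1).div (hadd.const_cpow (Or.inl hk0)) (by simp [hk0])
  exact ((differentiableAt_id.mul hpow).mul (hzeta.sub hsum)).differentiableWithinAt

theorem factorialSeries_hurwitzCoeff_fract {x : ℝ} (hx : 0 < x) {z : ℂ} (hz : z ≠ 0) :
    factorialSeries (hurwitzCoeff z (Int.fract x)) 0 x = z * (x : ℂ) ^ z *
      (riemannZeta (z + 1) - ∑ k ∈ Icc 1 ⌊x⌋₊, 1 / (k : ℂ) ^ (z + 1)) := by
  have hfract : Int.fract x ∈ Set.Icc 0 1 := ⟨Int.fract_nonneg x, (Int.fract_lt_one x).le⟩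
  have hright : {z : ℂ | 0 < z.re} ∈ 𝓝 1 :=
    (isOpen_lt continuous_const Complex.continuous_re).mem_nhds (by simp)
  refine AnalyticOnNhd.eqOn_of_preconnected_of_eventuallyEq (z₀ := 1)
    ((differentiable_factorialSeries_hurwitzCoeff hx hfract 0).differentiableOn.analyticOnNhd
      isOpen_compl_singleton)
    ((differentiableOn_mul_riemannZeta_sub_sum hx ⌊x⌋₊).analyticOnNhd isOpen_compl_singleton)
    (isPreconnected_compl_singleton_complex 0) (by simp) ?_ hz
  filter_upwards [hright] with z hz
  exact factorialSeries_hurwitzCoeff_fract_of_re_pos hx hz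

theorem sum_cpow_eq_riemannZeta_add_factorialSeries {x : ℝ} (hx : 0 < x) {m : ℂ} (hm : m ≠ -1) :
    ∑ k ∈ Icc 1 ⌊x⌋₊, (k : ℂ) ^ m = riemannZeta (-m) +
      (x : ℂ) ^ (m + 1) / (m + 1) *
        factorialSeries (hurwitzCoeff (-(m + 1)) (Int.fract x)) 0 x := by
  have hm1 : m + 1 ≠ 0 := fun h ↦ hm (eq_neg_of_add_eq_zero_left h)
  have hpow : (x : ℂ) ^ (m + 1) ≠ 0 := by simp [hx.ne']
  rw [factorialSeries_hurwitzCoeff_fract hx (neg_ne_zero.mpr hm1), neg_add_rev,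
    neg_add_cancel_comm, ← neg_add_rev, Complex.cpow_neg]
  simp_rw [Complex.cpow_neg, one_div, inv_inv]
  field_simp
  ring

theorem hurwitzCoeff_neg (w : ℂ) (θ : ℝ) (j : ℕ) :
    hurwitzCoeff (-w) θ j = (-1) ^ j * cchoose w j * bernPoly j θ := by
  rw [hurwitzCoeff, neg_one_pow_mul_cchoose, bernPoly_eq_bernoulliFun]

theorem neg_one_pow_mul_sum_cchoose_mul_S1 (w : ℂ) (θ : ℝ) (a k : ℕ) :
    (-1) ^ k * ∑ l ∈ Icc 1 k, cchoose w (l + a) * S1 k (l + a) * bernPoly (l + a) θ =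
      stirlingTail (hurwitzCoeff (-w) θ) (a + 1) k := by
  rw [stirlingTail_eq_sum_Ico (show k < k + 1 + a by lia), mul_sum, add_comm a 1,
    ← sum_Ico_add', Ico_add_one_right_eq_Icc]
  refine sum_congr rfl fun l _ ↦ ?_
  have hsign : (-1 : ℂ) ^ k * (-1) ^ (k + (l + a)) = (-1) ^ (l + a) := by
    rw [pow_add, ← mul_assoc, ← mul_pow, neg_one_mul, neg_neg, one_pow, one_mul]
  rw [hurwitzCoeff_neg, S1, stirling1Unsigned_eq_stirlingFirst]
  push_cast
  rw [← hsign]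
  ring

theorem cpow_mul_sum_hurwitzCoeff_div {x : ℝ} (hx : 0 < x) (m : ℂ) (θ : ℝ) (a : ℕ) :
    (x : ℂ) ^ (m + 1) * ∑ k ∈ Icc 1 a, hurwitzCoeff (-(m + 1)) θ k / (x : ℂ) ^ k =
      ∑ k ∈ Icc 1 a, (-1) ^ k * cchoose (m + 1) k * bernPoly k θ * (x : ℂ) ^ (m - k + 1) := by
  have hx0 : (x : ℂ) ≠ 0 := Complex.ofReal_ne_zero.mpr hx.ne'
  rw [mul_sum]
  refine sum_congr rfl fun k _ ↦ ?_
  rw [hurwitzCoeff_neg, sub_add_eq_add_sub, Complex.cpow_sub _ _ hx0, Complex.cpow_natCast]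
  ring

theorem factorialSeries_hurwitzCoeff_zero_eq_sum_add {x : ℝ} (hx : 0 < x) {θ : ℝ}
    (hθ : θ ∈ Set.Icc 0 1) (z : ℂ) (a : ℕ) :
    factorialSeries (hurwitzCoeff z θ) 0 x =
      1 + ∑ k ∈ Icc 1 a, hurwitzCoeff z θ k / (x : ℂ) ^ k +
        ∑' k, stirlingTail (hurwitzCoeff z θ) (a + 1) (k + 1) / risingProd x (k + 1) := by
  have hsum := summable_stirlingTail_hurwitzCoeff_div hx hθ z (a + 1)
  rw [factorialSeries_eq_sum_add hx (Nat.zero_le (a + 1)) hsum, factorialSeries,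
    hsum.tsum_eq_zero_add, stirlingTail_of_lt a.succ_pos, zero_div, zero_add,
    sum_eq_sum_Ico_succ_bot (Nat.add_one_pos a), zero_add, Ico_add_one_right_eq_Icc]
  simp [hurwitzCoeff]

end Faulhaber

open Finset in
/-- Other generalized Faulhaber formula version (first formula of Theorem 5.3):
shift parameter inside the Stirling number and outer factor `x^{m+1}`. -/
theorem other_generalized_faulhaber (m : ℂ) (hm : m ≠ -1)
    (x : ℝ) (hx : 0 < x) (a : ℕ) :
    Summable (fun k : ℕ =>
      ‖(-1 : ℂ) ^ (k + 1) *
          (∑ l ∈ Icc 1 (k + 1),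
            cchoose (m + 1) (l + a) * (S1 (k + 1) (l + a) : ℂ) *
              (bernPoly (l + a) (Int.fract x) : ℂ)) /
        risingProd (x : ℂ) (k + 1)‖) ∧
    (∑ k ∈ Icc 1 ⌊x⌋₊, (k : ℂ) ^ m) =
      (x : ℂ) ^ (m + 1) / (m + 1) + riemannZeta (-m) +
        1 / (m + 1) *
          ∑ k ∈ Icc 1 a,
            (-1 : ℂ) ^ k * cchoose (m + 1) k * (bernPoly k (Int.fract x) : ℂ) *
              (x : ℂ) ^ (m - k + 1) +
        (x : ℂ) ^ (m + 1) / (m + 1) *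
          ∑' k : ℕ,
            (-1 : ℂ) ^ (k + 1) *
                (∑ l ∈ Icc 1 (k + 1),
                  cchoose (m + 1) (l + a) * (S1 (k + 1) (l + a) : ℂ) *
                    (bernPoly (l + a) (Int.fract x) : ℂ)) /
              risingProd (x : ℂ) (k + 1) := by
  have hfract : Int.fract x ∈ Set.Icc 0 1 := ⟨Int.fract_nonneg x, (Int.fract_lt_one x).le⟩
  simp only [Faulhaber.neg_one_pow_mul_sum_cchoose_mul_S1]
  constructor
  · exact ((summable_nat_add_iff 1).mpr
      (Faulhaber.summable_stirlingTail_hurwitzCoeff_div hx hfract (-(m + 1)) (a + 1))).norm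
  · rw [Faulhaber.sum_cpow_eq_riemannZeta_add_factorialSeries hx hm,
      Faulhaber.factorialSeries_hurwitzCoeff_zero_eq_sum_add hx hfract _ a,
      ← Faulhaber.cpow_mul_sum_hurwitzCoeff_div hx]
    ring
end

section
/- Other harmonic sum version: Let x ∈ ℝ with x > 0 and let a ∈ ℕ₀. Then the series ∑_{k=1}^{∞} (−1)^{k+a+1} (∑_{l=1}^{k} ((−1)^l/(l+a)) S_k^{(1)}(l+a) B_{l+a}({x})) / ((x+1)(x+2)⋯(x+k)) converges absolutely, and ∑_{k=1}^{⌊x⌋} 1/k = log(x) + γ − ∑_{k=1}^{a} B_k({x})/(k x^k) + ∑_{k=1}^{∞} (−1)^{k+a+1} (∑_{l=1}^{k} ((−1)^l/(l+a)) S_k^{(1)}(l+a) B_{l+a}({x})) / ((x+1)(x+2)⋯(x+k)). -/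
/-!
Write `u(k, m)` for the coefficient of `y ^ m` in the rising factorial
`y^(k) = y (y + 1) ⋯ (y + k - 1)`. The umbral sum `T_k(y) = ∑ u(k, m) B_m(y) / m` satisfies
`k T_k(y) = y^(k) - ∫₀¹ s^(k) ds`, since both sides are polynomials with the same forward difference
and mean zero on `[0, 1]`. As `∑ s^(k) / x^(k+1) = 1 / (x - s)`, the inverse factorial series
`V(x, y) = ∑ T_k(y) / ((x + 1) ⋯ (x + k))` obeys
`V(x, y) - V(x + 1, y) = 1 / (x + 1 - y) - log ((x + 1) / x)`. Hence
`V(n + y, y) + H_n - log (n + y)` does not depend on `n`, and its value is `γ` because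
`|V(x, y)| ≤ 1 / x`. The terms with `m ≤ a` are split off by means of
`∑_k u(k, m) / ((x + 1) ⋯ (x + k)) = x ^ (-m)`.
-/

open Filter Polynomial Topology

lemma stirling1Unsigned_eq_stirlingFirst :
    ∀ k l : ℕ, stirling1Unsigned k l = Nat.stirlingFirst k l
  | 0, 0 => rfl
  | 0, _ + 1 => rfl
  | k + 1, 0 => by
    cases k with
    | zero => rfl
    | succ k => rw [stirling1Unsigned, stirling1Unsigned_eq_stirlingFirst]; simp
  | k + 1, l + 1 => by
    rw [stirling1Unsigned, Nat.stirlingFirst_succ_succ, stirling1Unsigned_eq_stirlingFirst,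
      stirling1Unsigned_eq_stirlingFirst, add_comm]

lemma risingProdR_eq_ascPochhammer_eval (x : ℝ) (k : ℕ) :
    risingProdR x k = (ascPochhammer ℝ k).eval (x + 1) := by
  induction k with
  | zero => simp [risingProdR]
  | succ k ih =>
    rw [ascPochhammer_succ_eval, ← ih, risingProdR, risingProdR, Finset.prod_range_succ,
      add_right_comm]

lemma bernPoly_eq_bernoulliFun (n : ℕ) (x : ℝ) : bernPoly n x = bernoulliFun n x := by
  simp [bernPoly, bernoulliFun, Polynomial.bernoulli, Polynomial.map_sum, eval_finsetSum,
    mul_comm]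

lemma coeff_ascPochhammer (R : Type*) [Semiring R] (n m : ℕ) :
    (ascPochhammer R n).coeff m = Nat.stirlingFirst n m := by
  induction n generalizing m with
  | zero => cases m <;> simp [coeff_one]
  | succ n ih =>
    cases m with
    | zero => simp [coeff_zero_eq_eval_zero]
    | succ m =>
      rw [ascPochhammer_succ_right, mul_add, coeff_add, coeff_mul_X, coeff_mul_natCast, ih, ih,
        Nat.stirlingFirst_succ_succ]
      push_cast
      rw [add_comm, Nat.cast_comm]

section OrderedSemiring

variable {S : Type*} [Semiring S] [PartialOrder S] [IsOrderedRing S]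

lemma ascPochhammer_eval_nonneg {s : S} (hs : 0 ≤ s) (k : ℕ) :
    0 ≤ (ascPochhammer S k).eval s := by
  induction k with
  | zero => simp
  | succ k ih =>
    rw [ascPochhammer_succ_eval]
    positivity

lemma ascPochhammer_eval_le_eval {s t : S} (hs : 0 ≤ s) (hst : s ≤ t) (k : ℕ) :
    (ascPochhammer S k).eval s ≤ (ascPochhammer S k).eval t := by
  induction k with
  | zero => simp
  | succ k ih =>
    rw [ascPochhammer_succ_eval, ascPochhammer_succ_eval]
    have := ascPochhammer_eval_nonneg (hs.trans hst) k
    gcongr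

end OrderedSemiring

lemma ascPochhammer_eval_add_one_mul {R : Type*} [CommSemiring R] (x : R) (k : ℕ) :
    x * (ascPochhammer R k).eval (x + 1) = (ascPochhammer R k).eval x * (x + k) := by
  rw [← ascPochhammer_succ_eval, ascPochhammer_succ_left]
  simp

lemma one_div_ascPochhammer_eval_sub {x : ℝ} (hx : 0 < x) (k : ℕ) :
    1 / (ascPochhammer ℝ k).eval x - 1 / (ascPochhammer ℝ k).eval (x + 1) =
      k / (ascPochhammer ℝ (k + 1)).eval x := by
  have hshift := ascPochhammer_eval_add_one_mul x k
  have hpos := ascPochhammer_pos k x hx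
  have hpos' := ascPochhammer_pos k (x + 1) (by positivity)
  rw [ascPochhammer_succ_eval, div_sub_div _ _ hpos.ne' hpos'.ne',
    div_eq_div_iff (by positivity) (by positivity)]
  linear_combination (ascPochhammer ℝ k).eval x * hshift

lemma gammaSeq_eq_div_ascPochhammer_eval (s : ℝ) (n : ℕ) :
    Real.GammaSeq s n = (n : ℝ) ^ s * n.factorial / (ascPochhammer ℝ (n + 1)).eval s := by
  rw [Real.GammaSeq]
  congr 1
  induction n + 1 with
  | zero => simp
  | succ k ih => rw [Finset.prod_range_succ, ascPochhammer_succ_eval, ih]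

lemma tendsto_ascPochhammer_eval_div {s x : ℝ} (hs : 0 ≤ s) (hsx : s < x) :
    Tendsto (fun k => (ascPochhammer ℝ k).eval s / (ascPochhammer ℝ k).eval x) atTop (𝓝 0) := by
  rw [← tendsto_add_atTop_iff_nat 1]
  rcases hs.eq_or_lt with rfl | hs
  · simp
  have hGamma := (Real.GammaSeq_tendsto_Gamma x).div (Real.GammaSeq_tendsto_Gamma s)
    (Real.Gamma_pos_of_pos hs).ne'
  have hpow : Tendsto (fun n : ℕ => (n : ℝ) ^ (-(x - s))) atTop (𝓝 0) :=
    (tendsto_rpow_neg_atTop (sub_pos.2 hsx)).comp tendsto_natCast_atTop_atTop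
  have hmul := hGamma.mul hpow
  rw [mul_zero] at hmul
  refine hmul.congr' ?_
  filter_upwards [eventually_gt_atTop 0] with n hn
  have hn' : (0 : ℝ) < n := by exact_mod_cast hn
  have hpos := ascPochhammer_pos (n + 1) s hs
  have hpos' := ascPochhammer_pos (n + 1) x (hs.trans hsx)
  rw [neg_sub, Real.rpow_sub hn', Pi.div_apply, gammaSeq_eq_div_ascPochhammer_eval,
    gammaSeq_eq_div_ascPochhammer_eval]
  field_simp

lemma hasSum_ascPochhammer_eval_div {s x : ℝ} (hs : 0 ≤ s) (hsx : s < x) :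
    HasSum (fun k => (ascPochhammer ℝ k).eval s / (ascPochhammer ℝ (k + 1)).eval x)
      (1 / (x - s)) := by
  have hx : 0 < x := hs.trans_lt hsx
  have hsub : x - s ≠ 0 := (sub_pos.2 hsx).ne'
  have hpartial (K : ℕ) :
      ∑ k ∈ Finset.range K, (ascPochhammer ℝ k).eval s / (ascPochhammer ℝ (k + 1)).eval x =
        (1 - (ascPochhammer ℝ K).eval s / (ascPochhammer ℝ K).eval x) / (x - s) := by
    induction K with
    | zero => simp
    | succ K ih =>
      have hpos := ascPochhammer_pos K x hx
      rw [Finset.sum_range_succ, ih, ascPochhammer_succ_eval, ascPochhammer_succ_eval]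
      field_simp
      ring
  rw [hasSum_iff_tendsto_nat_of_nonneg fun k => div_nonneg (ascPochhammer_eval_nonneg hs k)
    (ascPochhammer_eval_nonneg hx.le _)]
  simp only [hpartial]
  simpa using ((tendsto_ascPochhammer_eval_div hs hsx).const_sub 1).div_const (x - s)

lemma integral_one_div_sub {x : ℝ} (hx : 1 < x) :
    ∫ s in (0 : ℝ)..1, 1 / (x - s) = Real.log (x / (x - 1)) := by
  rw [intervalIntegral.integral_comp_sub_left (fun t => 1 / t), sub_zero,
    integral_one_div_of_pos (by linarith) (by linarith)]

lemma hasSum_integral_ascPochhammer_eval_div {x : ℝ} (hx : 1 < x) :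
    HasSum (fun k => (∫ s in (0 : ℝ)..1, (ascPochhammer ℝ k).eval s) /
      (ascPochhammer ℝ (k + 1)).eval x) (Real.log (x / (x - 1))) := by
  simp only [← intervalIntegral.integral_div]
  rw [← integral_one_div_sub hx]
  refine intervalIntegral.hasSum_integral_of_dominated_convergence
    (fun k _ => (ascPochhammer ℝ k).eval 1 / (ascPochhammer ℝ (k + 1)).eval x)
    (fun k => by fun_prop)
    (fun k => .of_forall fun s hs => ?_)
    (.of_forall fun _ _ => (hasSum_ascPochhammer_eval_div zero_le_one hx).summable)
    intervalIntegrable_const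
    (.of_forall fun s hs => ?_)
  all_goals rw [Set.uIoc_of_le zero_le_one] at hs
  · have hpos := ascPochhammer_pos (k + 1) x (by linarith)
    rw [Real.norm_of_nonneg (div_nonneg (ascPochhammer_eval_nonneg hs.1.le k) hpos.le)]
    gcongr
    exact ascPochhammer_eval_le_eval hs.1.le hs.2 k
  · exact hasSum_ascPochhammer_eval_div hs.1.le (hs.2.trans_lt hx)

lemma stirlingFirst_mul_pow_le_ascPochhammer_eval {s : ℝ} (hs : 0 ≤ s) (k m : ℕ) :
    Nat.stirlingFirst k m * s ^ m ≤ (ascPochhammer ℝ k).eval s := by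
  rw [eval_eq_sum_range' (n := (ascPochhammer ℝ k).natDegree + m + 1) (by omega)]
  simp only [coeff_ascPochhammer]
  exact Finset.single_le_sum (f := fun i => (Nat.stirlingFirst k i : ℝ) * s ^ i)
    (fun i _ => by positivity) (Finset.mem_range.2 (by omega))

lemma tendsto_mul_stirlingFirst_div {x : ℝ} (hx : 0 < x) (m : ℕ) :
    Tendsto (fun k : ℕ => k * (Nat.stirlingFirst k m / (ascPochhammer ℝ k).eval (x + 1))) atTop
      (𝓝 0) := by
  have hlim := ((tendsto_add_atTop_iff_nat 1).2 (tendsto_ascPochhammer_eval_div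
    (half_pos hx).le (half_lt_self hx))).const_mul (x / (x / 2) ^ m)
  rw [mul_zero] at hlim
  refine squeeze_zero (fun k => ?_) (fun k => ?_) hlim
  · have := ascPochhammer_eval_nonneg (by positivity : 0 ≤ x + 1) k
    positivity
  have hpos := ascPochhammer_pos k (x + 1) (by positivity)
  have hshift := ascPochhammer_eval_add_one_mul x k
  have hcoeff := stirlingFirst_mul_pow_le_ascPochhammer_eval (half_pos hx).le k m
  calc k * (Nat.stirlingFirst k m / (ascPochhammer ℝ k).eval (x + 1))
      = x / (x / 2) ^ m * (Nat.stirlingFirst k m * (x / 2) ^ m * k /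
          (x * (ascPochhammer ℝ k).eval (x + 1))) := by field_simp
    _ ≤ x / (x / 2) ^ m * ((ascPochhammer ℝ k).eval (x / 2) * (x / 2 + k) /
          (x * (ascPochhammer ℝ k).eval (x + 1))) := by
        gcongr
        · exact ascPochhammer_eval_nonneg (half_pos hx).le k
        · linarith
    _ = _ := by rw [hshift, ← ascPochhammer_succ_eval, ← ascPochhammer_succ_eval]

lemma sum_range_stirlingFirst_div {x : ℝ} (hx : 0 < x) (m K : ℕ) :
    ∑ k ∈ Finset.range K, Nat.stirlingFirst k m / (ascPochhammer ℝ k).eval (x + 1) =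
      x * ∑ k ∈ Finset.range (K + 1),
        Nat.stirlingFirst k (m + 1) / (ascPochhammer ℝ k).eval (x + 1) +
      K * (Nat.stirlingFirst K (m + 1) / (ascPochhammer ℝ K).eval (x + 1)) := by
  induction K with
  | zero => simp
  | succ K ih =>
    have hpos := ascPochhammer_pos K (x + 1) (by positivity)
    rw [Finset.sum_range_succ, ih, Finset.sum_range_succ _ (K + 1), ascPochhammer_succ_eval,
      Nat.stirlingFirst_succ_succ]
    push_cast
    field_simp
    ring

lemma hasSum_stirlingFirst_div {x : ℝ} (hx : 0 < x) (m : ℕ) :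
    HasSum (fun k => Nat.stirlingFirst k m / (ascPochhammer ℝ k).eval (x + 1)) (1 / x ^ m) := by
  induction m with
  | zero =>
    convert hasSum_single 0 fun k hk => ?_ using 1
    · simp
    · obtain ⟨j, rfl⟩ := Nat.exists_eq_succ_of_ne_zero hk
      simp
  | succ m ih =>
    rw [hasSum_iff_tendsto_nat_of_nonneg fun k => div_nonneg (Nat.cast_nonneg _)
      (ascPochhammer_eval_nonneg (by positivity) k), ← tendsto_add_atTop_iff_nat 1]
    have hlim := (ih.tendsto_sum_nat.sub (tendsto_mul_stirlingFirst_div hx (m + 1))).div_const x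
    rw [sub_zero, div_div, ← pow_succ] at hlim
    refine hlim.congr fun K => ?_
    rw [sum_range_stirlingFirst_div hx, add_sub_cancel_right, mul_div_cancel_left₀ _ hx.ne']

lemma eq_C_of_comp_X_add_one_eq_self {R : Type*} [CommRing R] [IsDomain R] [CharZero R]
    {p : R[X]} (hp : p.comp (X + 1) = p) : p = C (p.eval 0) := by
  have heval (n : ℕ) : p.eval (n : R) = p.eval 0 := by
    induction n with
    | zero => simp
    | succ n ih => simpa [ih] using congr(eval (n : R) $hp)
  refine eq_of_infinite_eval_eq _ _ ((Set.infinite_range_of_injective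
    (Nat.cast_injective (R := R))).mono ?_)
  rintro _ ⟨n, rfl⟩
  simpa using heval n

lemma map_bernoulli_succ_comp_X_add_one (n : ℕ) :
    ((Polynomial.bernoulli (n + 1)).map (algebraMap ℚ ℝ)).comp (X + 1) =
      (Polynomial.bernoulli (n + 1)).map (algebraMap ℚ ℝ) + C (n + 1 : ℝ) * X ^ n := by
  simpa [Polynomial.map_comp, add_comm] using
    congr(($(bernoulli_comp_one_add_X (n + 1))).map (algebraMap ℚ ℝ))

lemma eval_sub_integral_eq_sum_bernoulliFun {p : ℝ[X]} {n : ℕ} {c : ℕ → ℝ}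
    (hp : p.comp (X + 1) = p + ∑ m ∈ Finset.range n, C (c m) * X ^ m) (y : ℝ) :
    p.eval y - ∫ s in (0 : ℝ)..1, p.eval s =
      ∑ m ∈ Finset.range n, c m / (m + 1) * bernoulliFun (m + 1) y := by
  set q : ℝ[X] := ∑ m ∈ Finset.range n,
    C (c m / (m + 1)) * (Polynomial.bernoulli (m + 1)).map (algebraMap ℚ ℝ)
  have hq (t : ℝ) : q.eval t = ∑ m ∈ Finset.range n, c m / (m + 1) * bernoulliFun (m + 1) t := by
    simp [q, eval_finsetSum, bernoulliFun]
  have hq_comp : q.comp (X + 1) = q + ∑ m ∈ Finset.range n, C (c m) * X ^ m := by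
    rw [← Finset.sum_add_distrib, sum_comp]
    refine Finset.sum_congr rfl fun m _ => ?_
    rw [mul_comp, C_comp, map_bernoulli_succ_comp_X_add_one, mul_add, ← mul_assoc, ← C_mul,
      div_mul_cancel₀ _ (by positivity)]
  have hq_integral : ∫ s in (0 : ℝ)..1, q.eval s = 0 := by
    simp only [hq]
    rw [intervalIntegral.integral_finsetSum fun m _ =>
      ((continuous_bernoulliFun (m + 1)).const_mul _).intervalIntegrable _ _]
    simp [integral_bernoulliFun_eq_zero]
  have hconst : p - q = C ((p - q).eval 0) :=
    eq_C_of_comp_X_add_one_eq_self (by rw [sub_comp, hp, hq_comp, add_sub_add_right_eq_sub])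
  have hdiff (t : ℝ) : p.eval t - q.eval t = (p - q).eval 0 := by
    simpa using congr(eval t $hconst)
  have hp_integral : ∫ s in (0 : ℝ)..1, p.eval s = (p - q).eval 0 := by
    have hp_eval (t : ℝ) : p.eval t = q.eval t + (p - q).eval 0 := by linarith [hdiff t]
    simp only [hp_eval]
    rw [intervalIntegral.integral_add (q.continuous.intervalIntegrable _ _)
      intervalIntegrable_const, hq_integral]
    simp
  rw [hp_integral, ← hdiff y, ← hq, sub_sub_cancel]

lemma ascPochhammer_comp_X_add_one (R : Type*) [CommSemiring R] (k : ℕ) :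
    (ascPochhammer R k).comp (X + 1) =
      ∑ m ∈ Finset.range (k + 1), C (Nat.stirlingFirst (k + 1) (m + 1) : R) * X ^ m := by
  ext m
  rw [← coeff_X_mul, ← ascPochhammer_succ_left, coeff_ascPochhammer]
  simp only [finsetSum_coeff, coeff_C_mul_X_pow, Finset.sum_ite_eq, Finset.mem_range]
  split_ifs with hm
  · rfl
  · rw [Nat.stirlingFirst_eq_zero_of_lt (by omega), Nat.cast_zero]

/-- The polynomial obtained from the rising factorial `y (y + 1) ⋯ (y + k - 1)` by the umbral
substitution `y ^ m ↦ B_m(y) / m`, where the constant term is dropped. -/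
noncomputable def stirlingBernoulli (k : ℕ) (y : ℝ) : ℝ :=
  ∑ m ∈ Finset.Icc 1 k, Nat.stirlingFirst k m / m * bernoulliFun m y

lemma mul_stirlingBernoulli (k : ℕ) (y : ℝ) :
    k * stirlingBernoulli k y =
      (ascPochhammer ℝ k).eval y - ∫ s in (0 : ℝ)..1, (ascPochhammer ℝ k).eval s := by
  cases k with
  | zero => simp
  | succ k =>
    have hdiff : (ascPochhammer ℝ (k + 1)).comp (X + 1) =
        ascPochhammer ℝ (k + 1) + ∑ m ∈ Finset.range (k + 1),
          C ((k + 1) * Nat.stirlingFirst (k + 1) (m + 1) : ℝ) * X ^ m := by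
      rw [ascPochhammer_succ_comp_X_add_one, ascPochhammer_comp_X_add_one, Finset.smul_sum]
      simp [mul_assoc]
    rw [eval_sub_integral_eq_sum_bernoulliFun hdiff, stirlingBernoulli,
      ← Finset.Ico_add_one_right_eq_Icc, Finset.sum_Ico_eq_sum_range, Finset.mul_sum]
    refine Finset.sum_congr rfl fun m _ => ?_
    rw [add_comm 1 m]
    push_cast
    ring

lemma abs_stirlingBernoulli_le {y : ℝ} (hy : y ∈ Set.Icc 0 1) (k : ℕ) :
    |stirlingBernoulli k y| ≤ Nat.stirlingFirst k 1 := by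
  cases k with
  | zero => simp [stirlingBernoulli]
  | succ k =>
    have hmem (s : ℝ) (hs : s ∈ Set.Icc 0 1) :
        (ascPochhammer ℝ (k + 1)).eval s ∈ Set.Icc 0 ((k + 1).factorial : ℝ) :=
      ⟨ascPochhammer_eval_nonneg hs.1 _,
        (ascPochhammer_eval_le_eval hs.1 hs.2 _).trans_eq (ascPochhammer_eval_one ℝ _)⟩
    have hintegral : ∫ s in (0 : ℝ)..1, (ascPochhammer ℝ (k + 1)).eval s ∈
        Set.Icc 0 ((k + 1).factorial : ℝ) := by
      refine ⟨intervalIntegral.integral_nonneg zero_le_one fun s hs => (hmem s hs).1, ?_⟩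
      simpa using intervalIntegral.integral_mono_on
        (μ := MeasureTheory.volume) zero_le_one
        ((ascPochhammer ℝ (k + 1)).continuous.intervalIntegrable 0 1) intervalIntegrable_const
        fun s hs => (hmem s hs).2
    have habs := abs_sub_le_of_nonneg_of_le (hmem y hy).1 (hmem y hy).2 hintegral.1 hintegral.2
    rw [← mul_stirlingBernoulli, abs_mul, Nat.abs_cast, Nat.factorial_succ, Nat.cast_mul] at habs
    rw [Nat.stirlingFirst_one_right]
    exact le_of_mul_le_mul_left habs (by positivity)

/-- The inverse factorial series `∑ T_k(y) / ((x + 1) ⋯ (x + k))` with `T_k = stirlingBernoulli k`,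
the case `a = 0` of the series in the theorem up to sign, with `x` and `y` independent. -/
noncomputable def stirlingBernoulliSeries (x y : ℝ) : ℝ :=
  ∑' k, stirlingBernoulli k y / (ascPochhammer ℝ k).eval (x + 1)

section Series

variable {x y : ℝ}

lemma norm_stirlingBernoulli_div_le (hx : 0 < x) (hy : y ∈ Set.Icc 0 1) (k : ℕ) :
    ‖stirlingBernoulli k y / (ascPochhammer ℝ k).eval (x + 1)‖ ≤
      Nat.stirlingFirst k 1 / (ascPochhammer ℝ k).eval (x + 1) := by
  have hpos := ascPochhammer_pos k (x + 1) (by positivity)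
  rw [norm_div, Real.norm_eq_abs, Real.norm_of_nonneg hpos.le]
  gcongr
  exact abs_stirlingBernoulli_le hy k

lemma hasSum_stirlingBernoulliSeries (hx : 0 < x) (hy : y ∈ Set.Icc 0 1) :
    HasSum (fun k => stirlingBernoulli k y / (ascPochhammer ℝ k).eval (x + 1))
      (stirlingBernoulliSeries x y) :=
  (Summable.of_norm_bounded (hasSum_stirlingFirst_div hx 1).summable
    (norm_stirlingBernoulli_div_le hx hy)).hasSum

lemma norm_stirlingBernoulliSeries_le (hx : 0 < x) (hy : y ∈ Set.Icc 0 1) :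
    ‖stirlingBernoulliSeries x y‖ ≤ x⁻¹ := by
  simpa using! tsum_of_norm_bounded (hasSum_stirlingFirst_div hx 1)
    (norm_stirlingBernoulli_div_le hx hy)

lemma stirlingBernoulliSeries_sub_add_one (hx : 0 < x) (hy : y ∈ Set.Icc 0 1) :
    stirlingBernoulliSeries x y - stirlingBernoulliSeries (x + 1) y =
      1 / (x + 1 - y) - Real.log ((x + 1) / x) := by
  have hx1 : 0 < x + 1 := by positivity
  have hseries := (hasSum_stirlingBernoulliSeries hx hy).sub (hasSum_stirlingBernoulliSeries hx1 hy)
  have hvalue := (hasSum_ascPochhammer_eval_div hy.1 (by linarith [hy.2] : y < x + 1)).sub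
    (hasSum_integral_ascPochhammer_eval_div (by linarith : 1 < x + 1))
  rw [add_sub_cancel_right] at hvalue
  refine hseries.unique (hvalue.congr_fun fun k => ?_)
  calc _ = stirlingBernoulli k y * (1 / (ascPochhammer ℝ k).eval (x + 1) -
        1 / (ascPochhammer ℝ k).eval (x + 1 + 1)) := by ring
    _ = k * stirlingBernoulli k y / (ascPochhammer ℝ (k + 1)).eval (x + 1) := by
      rw [one_div_ascPochhammer_eval_sub hx1]; ring
    _ = _ := by rw [mul_stirlingBernoulli, sub_div]

end Series

lemma tendsto_harmonic_sub_log_add (y : ℝ) :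
    Tendsto (fun n : ℕ => (harmonic n : ℝ) - Real.log (n + y)) atTop
      (𝓝 Real.eulerMascheroniConstant) := by
  simpa using Real.tendsto_harmonic_sub_log.sub
    ((Real.tendsto_log_comp_add_sub_log y).comp tendsto_natCast_atTop_atTop)

lemma stirlingBernoulliSeries_natCast_add {n : ℕ} {y : ℝ} (hy : y ∈ Set.Icc 0 1)
    (hny : 0 < n + y) :
    stirlingBernoulliSeries (n + y) y =
      Real.log (n + y) + Real.eulerMascheroniConstant - harmonic n := by
  set W : ℕ → ℝ := fun n => stirlingBernoulliSeries (n + y) y + (harmonic n - Real.log (n + y))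
  have hW_succ (m : ℕ) (hm : 0 < m + y) : W (m + 1) = W m := by
    have hsub := stirlingBernoulliSeries_sub_add_one hm hy
    rw [Real.log_div (by positivity) hm.ne', add_right_comm, add_sub_cancel_right] at hsub
    simp only [W, harmonic_succ]
    push_cast
    rw [← one_div]
    linarith
  have hW_const (N : ℕ) : W (N + n) = W n := by
    induction N with
    | zero => simp
    | succ N ih =>
      rw [add_right_comm, hW_succ _ (by push_cast; linarith [N.cast_nonneg (α := ℝ)]), ih]
  have hseries : Tendsto (fun n : ℕ => stirlingBernoulliSeries (n + y) y) atTop (𝓝 0) := by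
    refine squeeze_zero_norm' ?_ (tendsto_inv_atTop_zero.comp
      (tendsto_atTop_add_const_right _ y tendsto_natCast_atTop_atTop))
    filter_upwards [eventually_gt_atTop 0] with n hn
    exact norm_stirlingBernoulliSeries_le (by have := hy.1; positivity) hy
  have hW_lim := (tendsto_add_atTop_iff_nat n).2 (hseries.add (tendsto_harmonic_sub_log_add y))
  have hW : W n = Real.eulerMascheroniConstant := by
    rw [← zero_add Real.eulerMascheroniConstant]
    exact tendsto_nhds_unique (tendsto_const_nhds.congr fun N => (hW_const N).symm) hW_lim
  simp only [W] at hW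
  linarith

lemma sum_Icc_stirlingFirst_add (a k : ℕ) (y : ℝ) :
    ∑ l ∈ Finset.Icc 1 k, Nat.stirlingFirst k (l + a) / (l + a : ℕ) * bernoulliFun (l + a) y =
      stirlingBernoulli k y -
        ∑ m ∈ Finset.Icc 1 a, Nat.stirlingFirst k m / m * bernoulliFun m y := by
  set f : ℕ → ℝ := fun m => Nat.stirlingFirst k m / m * bernoulliFun m y
  have hf (m : ℕ) (hm : k < m) : f m = 0 := by simp [f, Nat.stirlingFirst_eq_zero_of_lt hm]
  have hextend : stirlingBernoulli k y = ∑ m ∈ Finset.Ioc 0 (k + a), f m := by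
    exact Finset.sum_subset (by grind) fun m hm hm' => hf m (by grind)
  have hshift : ∑ l ∈ Finset.Icc 1 k, f (l + a) = ∑ m ∈ Finset.Ioc a (k + a), f m := by
    rw [← Finset.Ico_add_one_right_eq_Icc, Finset.sum_Ico_add' f, add_comm 1 a,
      add_right_comm, Finset.Ico_add_one_add_one_eq_Ioc]
  rw [hextend, hshift, eq_sub_iff_add_eq']
  exact Finset.sum_Ioc_consecutive f (Nat.zero_le a) (Nat.le_add_left a k)

lemma neg_one_pow_mul_sum_S1 (a k : ℕ) (y : ℝ) :
    (-1 : ℝ) ^ (k + a + 1) * ∑ l ∈ Finset.Icc 1 k,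
        (-1 : ℝ) ^ l / (l + a) * (S1 k (l + a) : ℝ) * bernPoly (l + a) y =
      ∑ m ∈ Finset.Icc 1 a, Nat.stirlingFirst k m / m * bernoulliFun m y -
        stirlingBernoulli k y := by
  rw [← neg_sub, ← sum_Icc_stirlingFirst_add, Finset.mul_sum, ← Finset.sum_neg_distrib]
  refine Finset.sum_congr rfl fun l _ => ?_
  have hsign : (-1 : ℝ) ^ (k + a + 1) * (-1) ^ l * (-1) ^ (k + (l + a)) = -1 := by
    rw [← pow_add, ← pow_add]
    exact Odd.neg_one_pow ⟨k + a + l, by ring⟩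
  rw [S1, bernPoly_eq_bernoulliFun, stirling1Unsigned_eq_stirlingFirst]
  push_cast
  linear_combination (Nat.stirlingFirst k (l + a) / (l + a) * bernoulliFun (l + a) y) * hsign

lemma hasSum_neg_one_pow_mul_sum_S1_div {x y : ℝ} (hx : 0 < x) (hy : y ∈ Set.Icc 0 1) (a : ℕ) :
    HasSum (fun k : ℕ => (-1 : ℝ) ^ (k + 1 + a + 1) *
        (∑ l ∈ Finset.Icc 1 (k + 1),
          (-1 : ℝ) ^ l / (l + a) * (S1 (k + 1) (l + a) : ℝ) * bernPoly (l + a) y) /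
        risingProdR x (k + 1))
      (∑ k ∈ Finset.Icc 1 a, bernPoly k y / (k * x ^ k) - stirlingBernoulliSeries x y) := by
  have hhead : HasSum (fun k => ∑ m ∈ Finset.Icc 1 a, bernPoly m y / m *
      (Nat.stirlingFirst k m / (ascPochhammer ℝ k).eval (x + 1)))
      (∑ m ∈ Finset.Icc 1 a, bernPoly m y / (m * x ^ m)) :=
    hasSum_sum fun m _ => by
      simpa only [div_mul_div_comm, mul_one] using
        (hasSum_stirlingFirst_div hx m).mul_left (bernPoly m y / m)
  have hterm (k : ℕ) : (-1 : ℝ) ^ (k + a + 1) * (∑ l ∈ Finset.Icc 1 k,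
        (-1 : ℝ) ^ l / (l + a) * (S1 k (l + a) : ℝ) * bernPoly (l + a) y) / risingProdR x k =
      ∑ m ∈ Finset.Icc 1 a, bernPoly m y / m *
        (Nat.stirlingFirst k m / (ascPochhammer ℝ k).eval (x + 1)) -
      stirlingBernoulli k y / (ascPochhammer ℝ k).eval (x + 1) := by
    rw [neg_one_pow_mul_sum_S1, risingProdR_eq_ascPochhammer_eval, sub_div, Finset.sum_div]
    refine congrArg (· - _) (Finset.sum_congr rfl fun m _ => ?_)
    rw [bernPoly_eq_bernoulliFun]
    ring
  have hall := (hhead.sub (hasSum_stirlingBernoulliSeries hx hy)).congr_fun hterm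
  simpa using! (hasSum_nat_add_iff' 1).2 hall

open Finset in
/-- Other harmonic sum version (the harmonic-sum formula of Theorem 5.3). -/
theorem other_harmonic_formula (x : ℝ) (hx : 0 < x) (a : ℕ) :
    Summable (fun k : ℕ =>
      |(-1 : ℝ) ^ (k + 1 + a + 1) *
          (∑ l ∈ Icc 1 (k + 1),
            (-1 : ℝ) ^ l / (l + a) * (S1 (k + 1) (l + a) : ℝ) *
              bernPoly (l + a) (Int.fract x)) /
        risingProdR x (k + 1)|) ∧
    (∑ k ∈ Icc 1 ⌊x⌋₊, (1 : ℝ) / k) =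
      Real.log x + Real.eulerMascheroniConstant -
        (∑ k ∈ Icc 1 a, bernPoly k (Int.fract x) / (k * x ^ k)) +
        ∑' k : ℕ,
          (-1 : ℝ) ^ (k + 1 + a + 1) *
              (∑ l ∈ Icc 1 (k + 1),
                (-1 : ℝ) ^ l / (l + a) * (S1 (k + 1) (l + a) : ℝ) *
                  bernPoly (l + a) (Int.fract x)) /
            risingProdR x (k + 1) := by
  have hfract : Int.fract x ∈ Set.Icc 0 1 := ⟨Int.fract_nonneg x, (Int.fract_lt_one x).le⟩
  have hseries := hasSum_neg_one_pow_mul_sum_S1_div hx hfract a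
  have hfloor : ⌊x⌋₊ + Int.fract x = x := by
    rw [natCast_floor_eq_intCast_floor hx.le, Int.floor_add_fract]
  have hvalue := stirlingBernoulliSeries_natCast_add hfract (hfloor.symm ▸ hx)
  rw [hfloor, harmonic_eq_sum_Icc] at hvalue
  refine ⟨hseries.summable.abs, ?_⟩
  rw [hseries.tsum_eq, hvalue]
  push_cast
  simp only [one_div]
  ring
end

section
/- Stirling's convergent formula for the partial sums of ζ(2): For every natural number n ≥ 1, the series ∑_{k=1}^{∞} (k−1)! / ((k+1) · n(n+1)(n+2)⋯(n+k)) converges, and ∑_{k=1}^{n} 1/k² = ζ(2) − 1/n + ∑_{k=1}^{∞} (k−1)! / ((k+1) · n(n+1)(n+2)⋯(n+k)). -/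
/-!
Put `S x = ∑ₖ k! / ((k + 2) x(x+1)⋯(x+k+1))`. The `k`-th term of `S x - S (x + 1)` telescopes in
`k`, which gives `S x - S (x + 1) = 1 / (x (x + 1)²)`, that is,
`(1 / x - S x) - (1 / (x + 1) - S (x + 1)) = 1 / (x + 1)²`. This telescopes in turn along `x`,
`x + 1`, `x + 2`, …, and `1 / x - S x → 0`, so `∑ⱼ 1 / (x + j + 1)² = 1 / x - S x` for `0 < re x`.
At `x = n` the left-hand side is the tail of the series of `ζ(2)`.
-/

open Filter Finset Topology

lemma hasSum_of_eq_sub_succ {G : Type*} [AddCommGroup G] [TopologicalSpace G]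
    [IsTopologicalAddGroup G] [T2Space G] {f g : ℕ → G} {l : G} (hf : Summable f)
    (hfg : ∀ k, f k = g k - g (k + 1)) (hg : Tendsto g atTop (𝓝 l)) : HasSum f (g 0 - l) := by
  rw [hf.hasSum_iff_tendsto_nat]
  simpa only [hfg, sum_range_sub'] using hg.const_sub (g 0)

lemma mul_prod_range_add_one_add {R : Type*} [CommSemiring R] (x : R) (m : ℕ) :
    x * ∏ i ∈ range m, (x + 1 + i) = (∏ i ∈ range m, (x + i)) * (x + m) := by
  rw [← prod_range_succ, prod_range_succ', mul_comm]
  simp only [Nat.cast_add, Nat.cast_one, Nat.cast_zero, add_zero, add_assoc, add_comm (1 : R)]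

section Field

variable {K : Type*} [Field K]

/-- The term `k! / (x(x+1)⋯(x+k+1))` of an inverse factorial series. Its successive differences
in `k` are the differences in `x` of `stirlingTerm`, up to the factor `x + 1`. -/
def invFactorialTerm (x : K) (k : ℕ) : K :=
  k.factorial / ∏ i ∈ range (k + 2), (x + i)

/-- The term `k! / ((k + 2) x(x+1)⋯(x+k+1))` of Stirling's series. The index `k : ℕ` starts
at `0`, so this is the paper's term of index `k + 1`. -/
def stirlingTerm (x : K) (k : ℕ) : K :=
  k.factorial / ((k + 2) * ∏ i ∈ range (k + 2), (x + i))

lemma stirlingTerm_eq_invFactorialTerm_div (x : K) (k : ℕ) :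
    stirlingTerm x k = invFactorialTerm x k / (k + 2) := by
  rw [stirlingTerm, invFactorialTerm, div_div, mul_comm]

lemma invFactorialTerm_zero (x : K) : invFactorialTerm x 0 = 1 / (x * (x + 1)) := by
  simp [invFactorialTerm, prod_range_succ]

lemma invFactorialTerm_succ (x : K) (k : ℕ) :
    invFactorialTerm x (k + 1) = invFactorialTerm x k * ((k + 1) / (x + (k + 2))) := by
  rw [invFactorialTerm, invFactorialTerm, prod_range_succ, Nat.factorial_succ, div_mul_div_comm]
  push_cast
  ring

lemma invFactorialTerm_add_one {x : K} (hx : x ≠ 0) (k : ℕ) :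
    invFactorialTerm (x + 1) k = invFactorialTerm x k * (x / (x + (k + 2))) := by
  have shift := mul_prod_range_add_one_add x (k + 2)
  push_cast at shift
  rw [invFactorialTerm, invFactorialTerm, div_mul_div_comm, ← shift, mul_comm x,
    mul_div_mul_right _ _ hx]

lemma stirlingTerm_sub_stirlingTerm_add_one [CharZero K] {x : K} (hx : ∀ i : ℕ, x + i ≠ 0)
    (k : ℕ) :
    stirlingTerm x k - stirlingTerm (x + 1) k =
      (invFactorialTerm x k - invFactorialTerm x (k + 1)) / (x + 1) := by
  have x_ne : x ≠ 0 := by simpa using hx 0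
  have x_add_one_ne : x + 1 ≠ 0 := by exact_mod_cast hx 1
  have x_add_ne : x + (k + 2) ≠ 0 := by exact_mod_cast hx (k + 2)
  have k_add_two_ne : (k + 2 : K) ≠ 0 := by exact_mod_cast (k + 1).succ_ne_zero
  rw [stirlingTerm_eq_invFactorialTerm_div, stirlingTerm_eq_invFactorialTerm_div,
    invFactorialTerm_add_one x_ne, invFactorialTerm_succ]
  field_simp
  ring

end Field

lemma summable_one_div_add_one_sq : Summable fun k : ℕ ↦ 1 / ((k : ℝ) + 1) ^ 2 := by
  exact_mod_cast (summable_nat_add_iff 1).2 (Real.summable_one_div_nat_pow.2 one_lt_two)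

section Complex

variable {x : ℂ}

lemma re_add_natCast_le_norm (x : ℂ) (m : ℕ) : x.re + m ≤ ‖x + m‖ := by
  simpa using (x + m).re_le_norm

lemma add_natCast_ne_zero_of_re_pos (hx : 0 < x.re) (m : ℕ) : x + m ≠ 0 :=
  Complex.ne_zero_of_re_pos (by simpa using by positivity)

lemma re_mul_factorial_le_norm_prod (hx : 0 ≤ x.re) (m : ℕ) :
    x.re * m.factorial ≤ ‖∏ i ∈ range (m + 1), (x + i)‖ := by
  induction m with
  | zero => simpa using x.re_le_norm
  | succ m ih =>
    have factor_le : ((m + 1 : ℕ) : ℝ) ≤ ‖x + (m + 1 : ℕ)‖ :=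
      (le_add_of_nonneg_left hx).trans (re_add_natCast_le_norm x (m + 1))
    rw [prod_range_succ, norm_mul, Nat.factorial_succ, mul_comm (m + 1), Nat.cast_mul, ← mul_assoc]
    gcongr

lemma norm_invFactorialTerm_le (hx : 0 < x.re) (k : ℕ) :
    ‖invFactorialTerm x k‖ ≤ 1 / x.re * (1 / (k + 1)) := by
  rw [invFactorialTerm, norm_div, Complex.norm_natCast]
  calc (k.factorial : ℝ) / ‖∏ i ∈ range (k + 2), (x + i)‖
      ≤ k.factorial / (x.re * (k + 1).factorial) := by
        gcongr
        exact re_mul_factorial_le_norm_prod hx.le (k + 1)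
    _ = 1 / x.re * (1 / (k + 1)) := by
        rw [Nat.factorial_succ]
        push_cast
        field_simp

lemma tendsto_invFactorialTerm (hx : 0 < x.re) :
    Tendsto (invFactorialTerm x) atTop (𝓝 0) :=
  squeeze_zero_norm (norm_invFactorialTerm_le hx) <| by
    simpa using (tendsto_one_div_add_atTop_nhds_zero_nat (𝕜 := ℝ)).const_mul (1 / x.re)

lemma norm_stirlingTerm_le (hx : 0 < x.re) (k : ℕ) :
    ‖stirlingTerm x k‖ ≤ 1 / x.re * (1 / (k + 1) ^ 2) := by
  have norm_add_two : ‖(k + 2 : ℂ)‖ = k + 2 := by exact_mod_cast Complex.norm_natCast (k + 2)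
  rw [stirlingTerm_eq_invFactorialTerm_div, norm_div, norm_add_two]
  calc ‖invFactorialTerm x k‖ / (k + 2) ≤ 1 / x.re * (1 / (k + 1)) / (k + 1) := by
        gcongr
        · exact norm_invFactorialTerm_le hx k
        · norm_num
    _ = 1 / x.re * (1 / (k + 1) ^ 2) := by field_simp

lemma summable_stirlingTerm (hx : 0 < x.re) : Summable (stirlingTerm x) :=
  .of_norm_bounded (summable_one_div_add_one_sq.mul_left _) (norm_stirlingTerm_le hx)

lemma norm_tsum_stirlingTerm_le (hx : 0 < x.re) :
    ‖∑' k, stirlingTerm x k‖ ≤ 1 / x.re * ∑' k : ℕ, 1 / ((k : ℝ) + 1) ^ 2 :=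
  tsum_of_norm_bounded (summable_one_div_add_one_sq.hasSum.mul_left _) (norm_stirlingTerm_le hx)

lemma tsum_stirlingTerm_sub_tsum_stirlingTerm_add_one (hx : 0 < x.re) :
    ∑' k, stirlingTerm x k - ∑' k, stirlingTerm (x + 1) k = 1 / (x * (x + 1) ^ 2) := by
  have summable_x := summable_stirlingTerm hx
  have summable_x_add_one : Summable (stirlingTerm (x + 1)) :=
    summable_stirlingTerm (by simpa using by positivity)
  have telescope : HasSum (fun k ↦ stirlingTerm x k - stirlingTerm (x + 1) k)
      (invFactorialTerm x 0 / (x + 1) - 0 / (x + 1)) :=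
    hasSum_of_eq_sub_succ (summable_x.sub summable_x_add_one)
      (fun k ↦ by
        rw [stirlingTerm_sub_stirlingTerm_add_one (add_natCast_ne_zero_of_re_pos hx), sub_div])
      ((tendsto_invFactorialTerm hx).div_const _)
  rw [← summable_x.tsum_sub summable_x_add_one, telescope.tsum_eq, invFactorialTerm_zero,
    zero_div, sub_zero, div_div, mul_assoc, sq]

lemma one_div_sub_tsum_stirlingTerm_sub_add_one (hx : 0 < x.re) :
    (1 / x - ∑' k, stirlingTerm x k) - (1 / (x + 1) - ∑' k, stirlingTerm (x + 1) k) =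
      1 / (x + 1) ^ 2 := by
  have x_ne : x ≠ 0 := Complex.ne_zero_of_re_pos hx
  have x_add_one_ne : x + 1 ≠ 0 := by exact_mod_cast add_natCast_ne_zero_of_re_pos hx 1
  rw [sub_sub_sub_comm, tsum_stirlingTerm_sub_tsum_stirlingTerm_add_one hx]
  field_simp
  ring

lemma tendsto_one_div_sub_tsum_stirlingTerm (hx : 0 < x.re) :
    Tendsto (fun m : ℕ ↦ 1 / (x + m) - ∑' k, stirlingTerm (x + m) k) atTop (𝓝 0) := by
  set C : ℝ := ∑' k : ℕ, 1 / ((k : ℝ) + 1) ^ 2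
  have re_pos (m : ℕ) : 0 < (x + m).re := by simpa using by positivity
  have norm_le (m : ℕ) :
      ‖1 / (x + m) - ∑' k, stirlingTerm (x + m) k‖ ≤ 1 / (x + m).re * (1 + C) :=
    calc ‖1 / (x + m) - ∑' k, stirlingTerm (x + m) k‖
        ≤ ‖1 / (x + m)‖ + ‖∑' k, stirlingTerm (x + m) k‖ := norm_sub_le _ _
      _ ≤ 1 / (x + m).re + 1 / (x + m).re * C := by
          rw [norm_div, norm_one]
          gcongr
          · exact re_pos m
          · exact (x + m).re_le_norm
          · exact norm_tsum_stirlingTerm_le (re_pos m)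
      _ = 1 / (x + m).re * (1 + C) := by ring
  have re_tendsto : Tendsto (fun m : ℕ ↦ (x + m).re) atTop atTop := by
    simpa using tendsto_atTop_add_const_left _ x.re tendsto_natCast_atTop_atTop
  refine squeeze_zero_norm norm_le ?_
  simpa using re_tendsto.inv_tendsto_atTop.mul_const (1 + C)

lemma summable_one_div_add_add_one_sq (hx : 0 ≤ x.re) :
    Summable fun j : ℕ ↦ 1 / (x + j + 1) ^ 2 := by
  refine .of_norm_bounded summable_one_div_add_one_sq fun j ↦ ?_
  have le_norm : (j + 1 : ℝ) ≤ ‖x + j + 1‖ := by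
    simpa [add_assoc] using
      (le_add_of_nonneg_left hx).trans (re_add_natCast_le_norm x (j + 1))
  rw [norm_div, norm_one, norm_pow]
  gcongr

theorem stirling_zeta_two_formula_general (hx : 0 < x.re) :
    Summable (stirlingTerm x) ∧
      HasSum (fun j : ℕ ↦ 1 / (x + j + 1) ^ 2) (1 / x - ∑' k, stirlingTerm x k) := by
  refine ⟨summable_stirlingTerm hx, ?_⟩
  have telescope (j : ℕ) : 1 / (x + j + 1) ^ 2 =
      (1 / (x + j) - ∑' k, stirlingTerm (x + j) k) -
        (1 / (x + (j + 1 : ℕ)) - ∑' k, stirlingTerm (x + (j + 1 : ℕ)) k) := by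
    rw [Nat.cast_succ, ← add_assoc,
      one_div_sub_tsum_stirlingTerm_sub_add_one (by simpa using by positivity)]
  simpa using hasSum_of_eq_sub_succ (summable_one_div_add_add_one_sq hx.le) telescope
    (tendsto_one_div_sub_tsum_stirlingTerm hx)

end Complex

lemma sum_Icc_one_div_sq_eq_riemannZeta_two_sub (n : ℕ) :
    ∑ k ∈ Icc 1 n, (1 : ℂ) / (k : ℂ) ^ 2 =
      riemannZeta 2 - ∑' j : ℕ, 1 / ((n : ℂ) + j + 1) ^ 2 := by
  have zeta_eq : riemannZeta 2 = ∑' j : ℕ, 1 / ((j : ℂ) + 1) ^ 2 := by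
    simpa using zeta_eq_tsum_one_div_nat_add_one_cpow (s := 2) (by simp)
  have summable_sq : Summable fun j : ℕ ↦ 1 / ((j : ℂ) + 1) ^ 2 := by
    simpa using summable_one_div_add_add_one_sq (x := 0) le_rfl
  have sum_eq : ∑ k ∈ Icc 1 n, (1 : ℂ) / (k : ℂ) ^ 2 =
      ∑ j ∈ range n, 1 / ((j : ℂ) + 1) ^ 2 := by
    simp [← Ico_add_one_right_eq_Icc, sum_Ico_eq_sum_range, add_comm]
  rw [sum_eq, zeta_eq, ← summable_sq.sum_add_tsum_nat_add n]
  simp [add_comm (n : ℂ)]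

open Finset in
/-- Stirling's convergent formula for the partial sums of `ζ(2)`
(formula (47) of the paper). -/
theorem stirling_zeta_two_formula (n : ℕ) (hn : 1 ≤ n) :
    Summable (fun k : ℕ =>
      ((k.factorial : ℂ)) /
        (((k : ℂ) + 2) * ∏ i ∈ Finset.range (k + 2), ((n : ℂ) + i))) ∧
    (∑ k ∈ Icc 1 n, (1 : ℂ) / (k : ℂ) ^ 2) =
      riemannZeta 2 - 1 / (n : ℂ) +
        ∑' k : ℕ,
          ((k.factorial : ℂ)) /
            (((k : ℂ) + 2) * ∏ i ∈ Finset.range (k + 2), ((n : ℂ) + i)) := by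
  obtain ⟨summable_term, hasSum_tail⟩ :=
    stirling_zeta_two_formula_general (x := n) (by exact_mod_cast hn)
  refine ⟨summable_term, ?_⟩
  rw [sum_Icc_one_div_sq_eq_riemannZeta_two_sub, hasSum_tail.tsum_eq, ← sub_add]
  rfl
end
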